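/- arXiv:1801.00521 — 4 statements merged into one kernel-verified Lean document; each statement's English description precedes it below -/
import Mathlib

section
/- Fix α > 0, β > 0 and an integer n ≥ 1, and define σ_n(t) := t(t−1) · d/dt log D_n(t, α, β) + d₁ t + d₂ for t ∈ (0,1), where d₁ := −(2n+α+β)²/4 and d₂ := ( 2n(n+α+β) + β(α+β) )/4. Then σ_n is twice differentiable on (0,1) and satisfies, for all t ∈ (0,1), the Jimbo–Miwa–Okamoto σ-form of Painlevé VI: σ_n' · ( t(t−1) σ_n'' )² + ( 2 σ_n' ( t σ_n' − σ_n ) − (σ_n')² − ν₁ν₂ν₃ν₄ )² = ( σ_n' + ν₁² )( σ_n' + ν₂² )( σ_n' + ν₃² )( σ_n' + ν₄² ), with parameters ν₁ = (α+β)/2, ν₂ = (β−α)/2, ν₃ = ν₄ = (2n+α+β)/2, where primes denote derivatives with respect to t. -/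
open MeasureTheory intervalIntegral

/-- The `n × n` Hankel determinant of the Jacobi weight `x^α (1-x)^β`
restricted to `[t, 1]`. -/
noncomputable def jacobiHankel (n : ℕ) (t α β : ℝ) : ℝ :=
  Matrix.det (Matrix.of fun i j : Fin n =>
    ∫ x in t..1, x ^ (((i : ℕ) : ℝ) + ((j : ℕ) : ℝ) + α) * (1 - x) ^ β)

/-!
Let `ℓ` be integration against the weight over `[t, 1]`, and let `P` and `Q` be its orthogonal
polynomials of degrees `n` and `n - 1`. As a function of `t` only the endpoint of integration moves,
so every derivative in `t` is an evaluation at `t`: the logarithmic derivative of the Hankel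
determinant is minus the weight times the diagonal Christoffel–Darboux kernel at `t`, and `P` and
`Q` move in the direction of that kernel. Consequently the residues at `0`, `1` and `t` of the
Fuchsian system solved by `(P, Q)` satisfy the Schlesinger equations, and the logarithmic derivative
is their Hamiltonian `H`. Since `H'` and `H''` are a sum of traces and a multiple of the triple
product `tr (A [A₁, A₀])`, and the square of the latter is a Gram determinant whose entries are
determined by `H`, `H'` and the exponents `α`, `β`, `n`, the σ-form follows.
-/

namespace JacobiPVI

open Polynomial Matrix

section OrthogonalPolynomials

variable {F : Type*} [Field F]

theorem coeff_eq_zero_of_mem_degreeLT {n k : ℕ} {f : F[X]} (hf : f ∈ degreeLT F n) (hk : n ≤ k) :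
    f.coeff k = 0 :=
  coeff_eq_zero_of_degree_lt ((mem_degreeLT.1 hf).trans_le (by exact_mod_cast hk))

theorem mem_degreeLT_of_coeff_eq_zero {n : ℕ} {f : F[X]} (hf : ∀ k, n ≤ k → f.coeff k = 0) :
    f ∈ degreeLT F n :=
  mem_degreeLT.2 ((degree_lt_iff_coeff_zero f n).2 hf)

theorem X_pow_mem_degreeLT {n k : ℕ} (hk : k < n) : (X ^ k : F[X]) ∈ degreeLT F n :=
  mem_degreeLT.2 ((degree_X_pow_le k).trans_lt (by exact_mod_cast hk))

theorem derivative_mem_degreeLT {n : ℕ} {f : F[X]} (hf : f ∈ degreeLT F n) :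
    derivative f ∈ degreeLT F n :=
  mem_degreeLT_of_coeff_eq_zero fun k hk => by
    rw [coeff_derivative, coeff_eq_zero_of_mem_degreeLT hf (by omega), zero_mul]

theorem coeff_derivative_eq_zero_of_mem_degreeLT {n : ℕ} {f : F[X]} (hf : f ∈ degreeLT F n) :
    (derivative f).coeff (n - 1) = 0 := by
  rw [coeff_derivative, coeff_eq_zero_of_mem_degreeLT hf (by omega), zero_mul]

theorem map_C_mul_eq (φ : F[X] →ₗ[F] F) (c : F) (f : F[X]) : φ (C c * f) = c * φ f := by
  rw [← smul_eq_C_mul, map_smul, smul_eq_mul]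

theorem eqOn_degreeLT {n : ℕ} {φ ψ : F[X] →ₗ[F] F} (h : ∀ k < n, φ (X ^ k) = ψ (X ^ k))
    {f : F[X]} (hf : f ∈ degreeLT F n) : φ f = ψ f := by
  classical
  rw [degreeLT_eq_span_X_pow] at hf
  exact LinearMap.eqOn_span (fun g hg => by
    obtain ⟨k, hk, rfl⟩ := Finset.mem_image.1 (Finset.mem_coe.1 hg)
    exact h k (Finset.mem_range.1 hk)) hf

theorem map_degreeLTEquiv_symm {n : ℕ} (φ : F[X] →ₗ[F] F) (v : Fin n → F) :
    φ ((degreeLTEquiv F n).symm v : F[X]) = ∑ i, v i * φ (X ^ (i : ℕ)) := by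
  change φ (∑ i : Fin n, monomial i (v i)) = _
  simp only [map_sum, ← C_mul_X_pow_eq_monomial, map_C_mul_eq]

theorem coeff_degreeLTEquiv_symm {n : ℕ} (v : Fin n → F) (i : Fin n) :
    ((degreeLTEquiv F n).symm v : F[X]).coeff i = v i :=
  congrFun ((degreeLTEquiv F n).apply_symm_apply v) i

variable (ℓ : F[X] →ₗ[F] F) (n : ℕ)

/-- The `n × n` Hankel matrix of the moments of a linear functional on polynomials. -/
noncomputable def hankel : Matrix (Fin n) (Fin n) F :=
  of fun i j => ℓ (X ^ ((i : ℕ) + (j : ℕ)))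

/-- The polynomial of degree `< n` which represents `φ` on polynomials of degree `< n` with respect
to the bilinear form `(f, g) ↦ ℓ (f * g)`. It has this property only if the Hankel determinant is
nonzero, since otherwise the inverse matrix is a junk value. -/
noncomputable def representer (φ : F[X] →ₗ[F] F) : F[X] :=
  (degreeLTEquiv F n).symm ((hankel ℓ n)⁻¹ *ᵥ fun j => φ (X ^ (j : ℕ)))

/-- The monic orthogonal polynomial of degree `n` of `ℓ`. -/
noncomputable def orthPoly : F[X] :=
  X ^ n - representer ℓ n (ℓ ∘ₗ LinearMap.mulLeft F (X ^ n))

/-- The orthogonal polynomial of degree `n - 1` of `ℓ`, not monic but normalised by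
`ℓ (prevOrthPoly ℓ n * X ^ (n - 1)) = 1`; it is `0` for `n = 0`. -/
noncomputable def prevOrthPoly : F[X] :=
  representer ℓ n (lcoeff F (n - 1))

/-- The Christoffel–Darboux kernel `x ↦ K(z, x)` of `ℓ`, defined by its reproducing property on
polynomials of degree `< n`. -/
noncomputable def cdKernel (z : F) : F[X] :=
  representer ℓ n (leval z)

local notation "P" => orthPoly ℓ n
local notation "Q" => prevOrthPoly ℓ n
local notation "K" => cdKernel ℓ n

theorem representer_mem (φ : F[X] →ₗ[F] F) : representer ℓ n φ ∈ degreeLT F n :=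
  ((degreeLTEquiv F n).symm _).2

theorem prevOrthPoly_mem : Q ∈ degreeLT F n :=
  representer_mem ℓ n _

theorem cdKernel_mem (z : F) : K z ∈ degreeLT F n :=
  representer_mem ℓ n _

theorem orthPoly_sub_X_pow_mem : P - X ^ n ∈ degreeLT F n := by
  rw [orthPoly, sub_sub_cancel_left]
  exact neg_mem (representer_mem ℓ n _)

theorem coeff_orthPoly_self : (P).coeff n = 1 := by
  have h := coeff_eq_zero_of_mem_degreeLT (orthPoly_sub_X_pow_mem ℓ n) le_rfl
  rwa [coeff_sub, coeff_X_pow_self, sub_eq_zero] at h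

theorem coeff_orthPoly_of_lt {k : ℕ} (hk : n < k) : (P).coeff k = 0 := by
  have h := coeff_eq_zero_of_mem_degreeLT (orthPoly_sub_X_pow_mem ℓ n) hk.le
  rwa [coeff_sub, coeff_X_pow, if_neg hk.ne', sub_zero] at h

theorem derivative_orthPoly_mem : derivative P ∈ degreeLT F n :=
  mem_degreeLT_of_coeff_eq_zero fun k hk => by
    rw [coeff_derivative, coeff_orthPoly_of_lt ℓ n (by omega), zero_mul]

theorem coeff_derivative_orthPoly : (derivative P).coeff (n - 1) = n := by
  rcases n with _ | m
  · simp [coeff_derivative, coeff_orthPoly_of_lt ℓ 0 one_pos]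
  · rw [coeff_derivative, Nat.add_sub_cancel, coeff_orthPoly_self, one_mul]
    push_cast
    rfl

theorem mul_degreeLTEquiv_symm (v : Fin n → F) (j : Fin n) :
    ℓ (((degreeLTEquiv F n).symm v : F[X]) * X ^ (j : ℕ)) = (hankel ℓ n *ᵥ v) j := by
  have h := map_degreeLTEquiv_symm (ℓ ∘ₗ LinearMap.mulRight F (X ^ (j : ℕ))) v
  simp only [LinearMap.comp_apply, LinearMap.mulRight_apply, ← pow_add] at h
  exact h.trans (Finset.sum_congr rfl fun i _ => by rw [mul_comm, add_comm]; rfl)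

theorem det_hankel_ne_zero (h : ∀ f ∈ degreeLT F n, f ≠ 0 → ℓ (f * f) ≠ 0) :
    (hankel ℓ n).det ≠ 0 := by
  by_contra hdet
  obtain ⟨v, hv, hker⟩ := exists_mulVec_eq_zero_iff.2 hdet
  set f := (degreeLTEquiv F n).symm v
  refine h f f.2 (by simpa [f] using hv) ?_
  have hf : ∀ g ∈ degreeLT F n, (ℓ ∘ₗ LinearMap.mulLeft F (f : F[X])) g = (0 : F[X] →ₗ[F] F) g :=
    fun g hg => eqOn_degreeLT (fun k hk => by
      simpa [f, hker] using mul_degreeLTEquiv_symm ℓ n v ⟨k, hk⟩) hg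
  exact hf f f.2

variable {ℓ n}
variable (hℓ : (hankel ℓ n).det ≠ 0)
include hℓ

theorem map_representer_mul (φ : F[X] →ₗ[F] F) {f : F[X]} (hf : f ∈ degreeLT F n) :
    ℓ (representer ℓ n φ * f) = φ f := by
  refine eqOn_degreeLT (φ := ℓ ∘ₗ LinearMap.mulLeft F (representer ℓ n φ)) (fun k hk => ?_) hf
  have h := mul_degreeLTEquiv_symm ℓ n ((hankel ℓ n)⁻¹ *ᵥ fun j => φ (X ^ (j : ℕ))) ⟨k, hk⟩
  rwa [mulVec_mulVec, mul_nonsing_inv _ (isUnit_iff_ne_zero.2 hℓ), one_mulVec] at h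

theorem map_orthPoly_mul {f : F[X]} (hf : f ∈ degreeLT F n) : ℓ (P * f) = 0 := by
  rw [orthPoly, sub_mul, map_sub, map_representer_mul hℓ _ hf]
  exact sub_self _

theorem map_prevOrthPoly_mul {f : F[X]} (hf : f ∈ degreeLT F n) : ℓ (Q * f) = f.coeff (n - 1) :=
  map_representer_mul hℓ _ hf

theorem map_cdKernel_mul (z : F) {f : F[X]} (hf : f ∈ degreeLT F n) : ℓ (K z * f) = f.eval z :=
  map_representer_mul hℓ _ hf

theorem eq_zero_of_map_mul_X_pow_eq_zero {f : F[X]} (hf : f ∈ degreeLT F n)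
    (h : ∀ k < n, ℓ (f * X ^ k) = 0) : f = 0 := by
  have hzero : ∀ g ∈ degreeLT F n, (ℓ ∘ₗ LinearMap.mulLeft F f) g = (0 : F[X] →ₗ[F] F) g :=
    fun g hg => eqOn_degreeLT h hg
  ext k
  rw [← lcoeff_apply, ← map_representer_mul hℓ (lcoeff F k) hf, mul_comm]
  exact hzero _ (representer_mem ℓ n _)

theorem coeff_cdKernel (z : F) : (K z).coeff (n - 1) = (Q).eval z := by
  rw [← map_prevOrthPoly_mul hℓ (cdKernel_mem ℓ _ z), mul_comm,
    map_cdKernel_mul hℓ z (prevOrthPoly_mem ℓ n)]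

theorem map_cdKernel_mul_X_pow (z : F) {k : ℕ} (hk : k ≤ n) :
    ℓ (K z * X ^ k) = z ^ k - if k = n then (P).eval z else 0 := by
  rcases hk.lt_or_eq with hk | rfl
  · simpa [hk.ne] using map_cdKernel_mul hℓ z (X_pow_mem_degreeLT hk)
  · have hX : cdKernel ℓ k z * X ^ k
        = orthPoly ℓ k * cdKernel ℓ k z - cdKernel ℓ k z * (orthPoly ℓ k - X ^ k) := by ring
    rw [hX, map_sub, map_orthPoly_mul hℓ (cdKernel_mem ℓ _ z),
      map_cdKernel_mul hℓ z (orthPoly_sub_X_pow_mem ℓ k)]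
    simp

theorem christoffel_darboux (z : F) :
    (C z - X) * K z = C ((P).eval z) * Q - C ((Q).eval z) * P := by
  have hK {k : ℕ} := coeff_eq_zero_of_mem_degreeLT (k := k) (cdKernel_mem ℓ n z)
  have hQ {k : ℕ} := coeff_eq_zero_of_mem_degreeLT (k := k) (prevOrthPoly_mem ℓ n)
  refine sub_eq_zero.1 (eq_zero_of_map_mul_X_pow_eq_zero hℓ ?_ fun k hk => ?_)
  · refine mem_degreeLT_of_coeff_eq_zero fun k hk => ?_
    rcases k with _ | k
    · have hK₀ : K z = 0 := ext fun j => by rw [hK (by omega), coeff_zero]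
      have hQ₀ : Q = 0 := ext fun j => by rw [hQ (by omega), coeff_zero]
      simp [hK₀, hQ₀]
    · simp only [sub_mul, coeff_sub, coeff_C_mul, coeff_X_mul, hK hk, hQ hk]
      rcases hk.eq_or_lt with rfl | hk'
      · have hKk := coeff_cdKernel hℓ z
        rw [Nat.add_sub_cancel] at hKk
        rw [hKk, coeff_orthPoly_self]
        ring
      · rw [hK (Nat.lt_succ_iff.1 hk'), coeff_orthPoly_of_lt ℓ n hk']
        ring
  · have hexpand : ((C z - X) * K z - (C ((P).eval z) * Q - C ((Q).eval z) * P)) * X ^ k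
        = C z * (K z * X ^ k) - K z * X ^ (k + 1)
          - (C ((P).eval z) * (Q * X ^ k) - C ((Q).eval z) * (P * X ^ k)) := by ring
    have hX := X_pow_mem_degreeLT (F := F) hk
    simp only [hexpand, map_sub, map_C_mul_eq, map_orthPoly_mul hℓ hX, map_prevOrthPoly_mul hℓ hX,
      map_cdKernel_mul_X_pow hℓ z hk.le, map_cdKernel_mul_X_pow hℓ z (k := k + 1) hk, coeff_X_pow,
      if_neg hk.ne, show n - 1 = k ↔ k + 1 = n by omega]
    split_ifs <;> ring

theorem eval_orthPoly_ne_zero_or (z : F) : (P).eval z ≠ 0 ∨ (Q).eval z ≠ 0 := by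
  rcases Nat.eq_zero_or_pos n with rfl | hn
  · left
    have hP : orthPoly ℓ 0 = 1 :=
      sub_eq_zero.1 (ext fun k =>
        coeff_eq_zero_of_mem_degreeLT (orthPoly_sub_X_pow_mem ℓ 0) k.zero_le)
    simp [hP]
  · by_contra! h
    have hcd := christoffel_darboux hℓ z
    simp only [h, map_zero, zero_mul, sub_zero, mul_eq_zero] at hcd
    have hX : (C z - X : F[X]) ≠ 0 := by
      rw [← neg_sub, neg_ne_zero]
      exact X_sub_C_ne_zero z
    have hone := map_cdKernel_mul hℓ z (X_pow_mem_degreeLT hn)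
    simp [hcd.resolve_left hX] at hone

theorem map_derivative_orthPoly_mul_cdKernel (z : F) :
    ℓ (derivative (P * K z)) = (derivative P).eval z := by
  rw [derivative_mul, map_add, map_orthPoly_mul hℓ (derivative_mem_degreeLT (cdKernel_mem ℓ n z)),
    mul_comm, map_cdKernel_mul hℓ z (derivative_orthPoly_mem ℓ n), add_zero]

theorem map_derivative_prevOrthPoly_mul_cdKernel (z : F) :
    ℓ (derivative (Q * K z)) = (derivative Q).eval z := by
  rw [derivative_mul, map_add,
    map_prevOrthPoly_mul hℓ (derivative_mem_degreeLT (cdKernel_mem ℓ n z)),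
    coeff_derivative_eq_zero_of_mem_degreeLT (cdKernel_mem ℓ n z), mul_comm,
    map_cdKernel_mul hℓ z (derivative_mem_degreeLT (prevOrthPoly_mem ℓ n)), add_zero]

theorem eval_cdKernel_self (z : F) :
    (K z).eval z = (Q).eval z * (derivative P).eval z - (P).eval z * (derivative Q).eval z := by
  have h := congrArg (fun f => eval z (derivative f)) (christoffel_darboux hℓ z)
  simp only [derivative_mul, derivative_sub, derivative_C, derivative_X, eval_add, eval_sub,
    eval_mul, eval_C, eval_X, sub_self, zero_mul, add_zero, zero_add, zero_sub, neg_mul,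
    one_mul, eval_neg] at h
  linear_combination -h

end OrthogonalPolynomials

section ResidueMatrices

variable {F : Type*} [Field F] (ℓ : F[X] →ₗ[F] F) (n : ℕ) (μ : F[X] →ₗ[F] F) (a : F)

local notation "P" => orthPoly ℓ n
local notation "Q" => prevOrthPoly ℓ n
local notation "K" => cdKernel ℓ n

/-- The residue at a simple pole `s` of the Fuchsian system solved by `(P, Q)`, conjugated by a
power of `z - s` to be traceless. The functional `μ` stands for `f ↦ a * ℓ (f / (X - s))`. -/
noncomputable def residue : Matrix (Fin 2) (Fin 2) F :=
  !![a / 2 - μ (P * Q), μ (P * P); -μ (Q * Q), μ (P * Q) - a / 2]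

theorem trace_residue : (residue ℓ n μ a).trace = 0 := by
  simp [residue, trace_fin_two]

theorem residue_add (ν : F[X] →ₗ[F] F) (b : F) :
    residue ℓ n (μ + ν) (a + b) = residue ℓ n μ a + residue ℓ n ν b := by
  ext i j
  fin_cases i <;> fin_cases j <;>
    simp only [residue, Matrix.add_apply, LinearMap.add_apply, of_apply, cons_val', cons_val_zero,
      cons_val_one, cons_val_fin_one, Fin.zero_eta, Fin.mk_one] <;>
    ring

theorem trace_residue_smul_leval_mul [NeZero (2 : F)] (z w : F) :
    (residue ℓ n (w • leval z) 0 * residue ℓ n μ a).trace =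
      w * ((Q).eval z * ((P).eval z * μ (P * Q) - (Q).eval z * μ (P * P))
      - (P).eval z * (a * (Q).eval z + (P).eval z * μ (Q * Q) - (Q).eval z * μ (P * Q))) := by
  simp only [residue, trace_fin_two, mul_fin_two, of_apply, cons_val', cons_val_zero, cons_val_one,
    cons_val_fin_one, LinearMap.smul_apply, leval_apply, eval_mul, smul_eq_mul]
  linear_combination -w * (P).eval z * (Q).eval z * add_halves a

theorem lie_residue_smul_leval [NeZero (2 : F)] (z w : F) :
    ⁅residue ℓ n (w • leval z) 0, residue ℓ n μ a⁆ = w •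
      !![(Q).eval z ^ 2 * μ (P * P) - (P).eval z ^ 2 * μ (Q * Q),
         2 * (P).eval z * ((P).eval z * μ (P * Q) - (Q).eval z * μ (P * P)) - a * (P).eval z ^ 2;
         2 * (Q).eval z * ((Q).eval z * μ (P * Q) - (P).eval z * μ (Q * Q)) - a * (Q).eval z ^ 2,
         (P).eval z ^ 2 * μ (Q * Q) - (Q).eval z ^ 2 * μ (P * P)] := by
  ext i j
  fin_cases i <;> fin_cases j <;>
    simp only [residue, Ring.lie_def, mul_fin_two, Matrix.sub_apply, Matrix.smul_apply,
      LinearMap.smul_apply, leval_apply, eval_mul, smul_eq_mul, of_apply, cons_val',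
      cons_val_zero, cons_val_one, cons_val_fin_one, Fin.zero_eta, Fin.mk_one] <;>
    field

variable {ℓ n μ a} {s : F} (hℓ : (hankel ℓ n).det ≠ 0)
include hℓ

theorem residue_neg_comp_derivative :
    residue ℓ n (-(ℓ ∘ₗ derivative)) a = !![n + a / 2, 0; 0, -(n + a / 2)] := by
  have hP := derivative_orthPoly_mem ℓ n
  have hQ := derivative_mem_degreeLT (prevOrthPoly_mem ℓ n)
  have hPP : ℓ (derivative (P * P)) = 0 := by
    rw [derivative_mul, mul_comm, map_add, map_orthPoly_mul hℓ hP, add_zero]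
  have hPQ : ℓ (derivative (P * Q)) = n := by
    rw [derivative_mul, mul_comm, map_add, map_orthPoly_mul hℓ hQ, map_prevOrthPoly_mul hℓ hP,
      coeff_derivative_orthPoly, add_zero]
  have hQQ : ℓ (derivative (Q * Q)) = 0 := by
    rw [derivative_mul, mul_comm, map_add, map_prevOrthPoly_mul hℓ hQ,
      coeff_derivative_eq_zero_of_mem_degreeLT (prevOrthPoly_mem ℓ n), add_zero]
  simp only [residue, LinearMap.neg_apply, LinearMap.comp_apply, hPP, hPQ, hQQ]
  ring_nf

variable (hμ : ∀ f, μ ((X - C s) * f) = a * ℓ f)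
include hμ

theorem sub_mul_map_orthPoly_mul_cdKernel (z : F) :
    (z - s) * μ (P * K z) = (P).eval z * μ (P * Q) - (Q).eval z * μ (P * P) := by
  have hsplit : C (z - s) * (P * K z) = P * ((C z - X) * K z) + (X - C s) * (P * K z) := by
    rw [C_sub]; ring
  rw [← map_C_mul_eq, hsplit, map_add, hμ, map_orthPoly_mul hℓ (cdKernel_mem ℓ n z),
    christoffel_darboux hℓ, mul_sub, mul_left_comm P, mul_left_comm P, map_sub, map_C_mul_eq,
    map_C_mul_eq, mul_zero, add_zero]

theorem sub_mul_map_prevOrthPoly_mul_cdKernel (z : F) :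
    (z - s) * μ (Q * K z) =
      a * (Q).eval z + (P).eval z * μ (Q * Q) - (Q).eval z * μ (P * Q) := by
  have hsplit : C (z - s) * (Q * K z) = Q * ((C z - X) * K z) + (X - C s) * (Q * K z) := by
    rw [C_sub]; ring
  rw [← map_C_mul_eq, hsplit, map_add, hμ, map_prevOrthPoly_mul hℓ (cdKernel_mem ℓ n z),
    coeff_cdKernel hℓ, christoffel_darboux hℓ, mul_sub, mul_left_comm Q, mul_left_comm Q, map_sub,
    map_C_mul_eq, map_C_mul_eq, mul_comm Q P]
  ring

theorem det_residue [NeZero (2 : F)] : (residue ℓ n μ a).det = -(a / 2) ^ 2 := by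
  have h₁ := sub_mul_map_orthPoly_mul_cdKernel hℓ hμ s
  have h₂ := sub_mul_map_prevOrthPoly_mul_cdKernel hℓ hμ s
  rw [sub_self, zero_mul] at h₁ h₂
  have hsing : μ (P * P) * μ (Q * Q) = μ (P * Q) * (μ (P * Q) - a) := by
    rcases eval_orthPoly_ne_zero_or hℓ s with h | h <;> refine mul_left_cancel₀ h ?_
    · linear_combination -(μ (P * P)) * h₂ + (μ (P * Q) - a) * h₁
    · linear_combination -(μ (P * Q)) * h₂ + (μ (Q * Q)) * h₁
  rw [residue, det_fin_two_of]
  linear_combination hsing + μ (P * Q) * add_halves a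

theorem trace_residue_mul_eq [NeZero (2 : F)] (z w : F) :
    (residue ℓ n (w • leval z) 0 * residue ℓ n μ a).trace =
      w * (z - s) * ((Q).eval z * μ (P * K z) - (P).eval z * μ (Q * K z)) := by
  rw [trace_residue_smul_leval_mul]
  linear_combination -w * ((Q).eval z) * sub_mul_map_orthPoly_mul_cdKernel hℓ hμ z
    + w * ((P).eval z) * sub_mul_map_prevOrthPoly_mul_cdKernel hℓ hμ z

theorem trace_residue_mul_div_add [NeZero (2 : F)] {ν : F[X] →ₗ[F] F} {b s' z w : F}
    (hν : ∀ f, ν ((X - C s') * f) = b * ℓ f) (hsum : μ + ν + w • leval z = -(ℓ ∘ₗ derivative))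
    (hs : z ≠ s) (hs' : z ≠ s') :
    (residue ℓ n (w • leval z) 0 * residue ℓ n μ a).trace / (z - s)
      + (residue ℓ n (w • leval z) 0 * residue ℓ n ν b).trace / (z - s')
      = -(w * (K z).eval z) := by
  have hμν (f : F[X]) : μ f + ν f = -ℓ (derivative f) - w * f.eval z :=
    eq_sub_of_add_eq (LinearMap.congr_fun hsum f)
  have hP := hμν (P * K z)
  have hQ := hμν (Q * K z)
  rw [map_derivative_orthPoly_mul_cdKernel hℓ, eval_mul] at hP
  rw [map_derivative_prevOrthPoly_mul_cdKernel hℓ, eval_mul] at hQ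
  rw [trace_residue_mul_eq hℓ hμ, trace_residue_mul_eq hℓ hν, mul_right_comm w (z - s),
    mul_right_comm w (z - s'), mul_div_cancel_right₀ _ (sub_ne_zero.2 hs),
    mul_div_cancel_right₀ _ (sub_ne_zero.2 hs'), eval_cdKernel_self hℓ]
  linear_combination w * (Q).eval z * hP - w * (P).eval z * hQ

end ResidueMatrices

section Schlesinger

variable {𝕜 : Type*} [NontriviallyNormedField 𝕜]

/-- The Schlesinger system with poles `0`, `1`, `t` and residues `A₀`, `A₁`, `A` at these poles,
normalised by a constant residue `-M` at infinity. -/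
structure IsSchlesinger {𝔸 : Type*} [NormedRing 𝔸] [NormedAlgebra 𝕜 𝔸] (M : 𝔸)
    (A₀ A₁ A : 𝕜 → 𝔸) (s : Set 𝕜) : Prop where
  hasDerivAt_zero : ∀ t ∈ s, HasDerivAt A₀ (t⁻¹ • ⁅A t, A₀ t⁆) t
  hasDerivAt_one : ∀ t ∈ s, HasDerivAt A₁ ((t - 1)⁻¹ • ⁅A t, A₁ t⁆) t
  add_eq : ∀ t ∈ s, A₀ t + A₁ t + A t = M

/-- The Hamiltonian `t (t - 1) (τ (A A₀) / t + τ (A A₁) / (t - 1))` of the Schlesinger system for a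
trace `τ`, with denominators cleared. -/
def hamiltonian {𝔸 : Type*} [Mul 𝔸] (τ : 𝔸 → 𝕜) (A₀ A₁ A : 𝕜 → 𝔸) (t : 𝕜) : 𝕜 :=
  (t - 1) * τ (A t * A₀ t) + t * τ (A t * A₁ t)

namespace IsSchlesinger

variable {𝔸 : Type*} [NormedRing 𝔸] [NormedAlgebra 𝕜 𝔸] {M : 𝔸} {A₀ A₁ A : 𝕜 → 𝔸} {s : Set 𝕜}

theorem hasDerivAt (h : IsSchlesinger M A₀ A₁ A s) (hs : IsOpen s) {t : 𝕜} (ht : t ∈ s) :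
    HasDerivAt A (-(t⁻¹ • ⁅A t, A₀ t⁆ + (t - 1)⁻¹ • ⁅A t, A₁ t⁆)) t := by
  have hd := ((h.hasDerivAt_zero t ht).add (h.hasDerivAt_one t ht)).const_sub M
  refine hd.congr_of_eventuallyEq ?_
  filter_upwards [hs.mem_nhds ht] with r hr
  simp [← h.add_eq r hr]

variable (τ : 𝔸 →L[𝕜] 𝕜) (hτ : ∀ x y, τ (x * y) = τ (y * x))
include hτ

theorem map_lie_mul (x y z : 𝔸) : τ (⁅x, y⁆ * z) = τ (x * ⁅y, z⁆) := by
  rw [Ring.lie_def, Ring.lie_def, sub_mul, mul_sub, map_sub, map_sub, mul_assoc, mul_assoc,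
    hτ y (x * z), mul_assoc]

theorem hasDerivAt_map_mul_zero (h : IsSchlesinger M A₀ A₁ A s) (hs : IsOpen s) {t : 𝕜}
    (ht : t ∈ s) :
    HasDerivAt (fun r => τ (A r * A₀ r)) (-((t - 1)⁻¹ * τ (A t * ⁅A₁ t, A₀ t⁆))) t := by
  refine (τ.hasFDerivAt.comp_hasDerivAt t
    ((h.hasDerivAt hs ht).mul (h.hasDerivAt_zero t ht))).congr_deriv ?_
  have hself : τ (A t * ⁅A t, A₀ t⁆) = 0 := by
    rw [← map_lie_mul τ hτ, (Commute.refl (A t)).lie_eq, zero_mul, map_zero]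
  simp only [neg_mul, add_mul, smul_mul_assoc, mul_smul_comm, map_add, map_neg, map_smul,
    smul_eq_mul, map_lie_mul τ hτ, (Commute.refl (A₀ t)).lie_eq, mul_zero, map_zero, hself,
    zero_add, add_zero]

theorem hasDerivAt_map_mul_one (h : IsSchlesinger M A₀ A₁ A s) (hs : IsOpen s) {t : 𝕜}
    (ht : t ∈ s) :
    HasDerivAt (fun r => τ (A r * A₁ r)) (-(t⁻¹ * τ (A t * ⁅A₀ t, A₁ t⁆))) t := by
  refine (τ.hasFDerivAt.comp_hasDerivAt t
    ((h.hasDerivAt hs ht).mul (h.hasDerivAt_one t ht))).congr_deriv ?_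
  have hself : τ (A t * ⁅A t, A₁ t⁆) = 0 := by
    rw [← map_lie_mul τ hτ, (Commute.refl (A t)).lie_eq, zero_mul, map_zero]
  simp only [neg_mul, add_mul, smul_mul_assoc, mul_smul_comm, map_add, map_neg, map_smul,
    smul_eq_mul, map_lie_mul τ hτ, (Commute.refl (A₁ t)).lie_eq, mul_zero, map_zero, hself,
    add_zero]

variable (hs : IsOpen s) (h₀ : 0 ∉ s) (h₁ : 1 ∉ s)
include hs h₀ h₁

theorem hasDerivAt_hamiltonian (h : IsSchlesinger M A₀ A₁ A s) {t : 𝕜} (ht : t ∈ s) :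
    HasDerivAt (hamiltonian τ A₀ A₁ A) (τ (A t * A₀ t) + τ (A t * A₁ t)) t := by
  have ht₀ : t ≠ 0 := fun h => h₀ (h ▸ ht)
  have ht₁ : t - 1 ≠ 0 := sub_ne_zero.2 fun h => h₁ (h ▸ ht)
  refine ((((hasDerivAt_id t).sub_const 1).mul (h.hasDerivAt_map_mul_zero τ hτ hs ht)).add
    ((hasDerivAt_id t).mul (h.hasDerivAt_map_mul_one τ hτ hs ht))).congr_deriv ?_
  have hskew : ⁅A₀ t, A₁ t⁆ = -⁅A₁ t, A₀ t⁆ := (neg_sub _ _).symm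
  simp only [id_eq, hskew, mul_neg, map_neg]
  field_simp
  ring

theorem hasDerivAt_deriv_hamiltonian (h : IsSchlesinger M A₀ A₁ A s) {t : 𝕜} (ht : t ∈ s) :
    HasDerivAt (deriv (hamiltonian τ A₀ A₁ A))
      (-τ (A t * ⁅A₁ t, A₀ t⁆) / (t * (t - 1))) t := by
  have ht₀ : t ≠ 0 := fun h => h₀ (h ▸ ht)
  have ht₁ : t - 1 ≠ 0 := sub_ne_zero.2 fun h => h₁ (h ▸ ht)
  have hd := (h.hasDerivAt_map_mul_zero τ hτ hs ht).add (h.hasDerivAt_map_mul_one τ hτ hs ht)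
  have hskew : ⁅A₀ t, A₁ t⁆ = -⁅A₁ t, A₀ t⁆ := (neg_sub _ _).symm
  simp only [hskew, mul_neg, map_neg] at hd
  refine (hd.congr_of_eventuallyEq ?_).congr_deriv (by field_simp; ring)
  filter_upwards [hs.mem_nhds ht] with r hr
  exact (h.hasDerivAt_hamiltonian τ hτ hs h₀ h₁ hr).deriv

end IsSchlesinger

section TwoByTwo

variable {R : Type*} [CommRing R] {A B C : Matrix (Fin 2) (Fin 2) R}

theorem trace_mul_self_of_trace_eq_zero (hA : A.trace = 0) : (A * A).trace = -2 * A.det := by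
  simp only [trace_fin_two, mul_apply, Fin.sum_univ_two, det_fin_two] at hA ⊢
  linear_combination (A 0 0 + A 1 1) * hA

-- On `sl₂` the triple product `tr (A [B, C])` is a volume form, so its square is a multiple of the
-- Gram determinant of the trace form.
theorem sq_trace_mul_lie (hA : A.trace = 0) (hB : B.trace = 0) (hC : C.trace = 0) :
    (A * ⁅B, C⁆).trace ^ 2 = -2 * det
      !![(A * A).trace, (A * B).trace, (A * C).trace;
         (A * B).trace, (B * B).trace, (B * C).trace;
         (A * C).trace, (B * C).trace, (C * C).trace] := by
  rw [trace_fin_two, add_comm, add_eq_zero_iff_eq_neg] at hA hB hC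
  simp only [det_fin_three, of_apply, cons_val', cons_val, cons_val_fin_one, trace_fin_two,
    Ring.lie_def, mul_apply, Matrix.sub_apply, Fin.sum_univ_two, hA, hB, hC]
  ring

end TwoByTwo

open scoped Matrix.Norms.Operator

theorem sq_trace_mul_lie_eq {α β N : ℝ} {A₀ A₁ A : Matrix (Fin 2) (Fin 2) ℝ}
    (trA₀ : A₀.trace = 0) (trA₁ : A₁.trace = 0) (trA : A.trace = 0)
    (detM : (A₀ + A₁ + A).det = -N ^ 2) (detA₀ : A₀.det = -(α / 2) ^ 2)
    (detA₁ : A₁.det = -(β / 2) ^ 2) (detA : A.det = 0) :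
    (A * ⁅A₁, A₀⁆).trace ^ 2 =
      -4 * (A * A₀).trace * (A * A₁).trace
          * (N ^ 2 - (α ^ 2 + β ^ 2) / 4 - (A * A₀).trace - (A * A₁).trace)
        + (A * A₀).trace ^ 2 * β ^ 2 + (A * A₁).trace ^ 2 * α ^ 2 := by
  have htrace : (A₁ * A₀).trace
      = N ^ 2 - (α ^ 2 + β ^ 2) / 4 - (A * A₀).trace - (A * A₁).trace := by
    have hsq : ((A₀ + A₁ + A) * (A₀ + A₁ + A)).trace
        = 2 * ((A₁ * A₀).trace + (A * A₀).trace + (A * A₁).trace)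
          + (A₀ * A₀).trace + (A₁ * A₁).trace + (A * A).trace := by
      simp only [add_mul, mul_add, trace_add, trace_mul_comm A₀ A, trace_mul_comm A₁ A,
        trace_mul_comm A₀ A₁]
      ring
    rw [trace_mul_self_of_trace_eq_zero trA₀, trace_mul_self_of_trace_eq_zero trA₁,
      trace_mul_self_of_trace_eq_zero trA, trace_mul_self_of_trace_eq_zero
      (by rw [trace_add, trace_add, trA₀, trA₁, trA, add_zero, add_zero]),
      detM, detA₀, detA₁, detA] at hsq
    linear_combination -hsq / 2
  rw [sq_trace_mul_lie trA trA₁ trA₀, trace_mul_self_of_trace_eq_zero trA,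
    trace_mul_self_of_trace_eq_zero trA₀, trace_mul_self_of_trace_eq_zero trA₁, detA₀, detA₁,
    detA, htrace, det_fin_three]
  simp only [of_apply, cons_val', cons_val, cons_val_fin_one]
  ring

theorem sigma_form_of_isSchlesinger {α β N : ℝ} {M : Matrix (Fin 2) (Fin 2) ℝ}
    {A₀ A₁ A : ℝ → Matrix (Fin 2) (Fin 2) ℝ} {s : Set ℝ} {σ : ℝ → ℝ}
    (hs : IsOpen s) (h₀ : 0 ∉ s) (h₁ : 1 ∉ s) (h : IsSchlesinger M A₀ A₁ A s)
    (trA₀ : ∀ t ∈ s, (A₀ t).trace = 0) (trA₁ : ∀ t ∈ s, (A₁ t).trace = 0)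
    (trA : ∀ t ∈ s, (A t).trace = 0) (detM : M.det = -N ^ 2)
    (detA₀ : ∀ t ∈ s, (A₀ t).det = -(α / 2) ^ 2) (detA₁ : ∀ t ∈ s, (A₁ t).det = -(β / 2) ^ 2)
    (detA : ∀ t ∈ s, (A t).det = 0)
    (hσ : ∀ t ∈ s, σ t =
      hamiltonian trace A₀ A₁ A t - N ^ 2 * t + (N ^ 2 / 2 + (β ^ 2 - α ^ 2) / 8)) :
    DifferentiableOn ℝ σ s ∧ DifferentiableOn ℝ (deriv σ) s ∧
    ∀ t ∈ s,
      deriv σ t * (t * (t - 1) * deriv (deriv σ) t) ^ 2 +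
        (2 * deriv σ t * (t * deriv σ t - σ t) - (deriv σ t) ^ 2 -
          ((α + β) / 2) * ((β - α) / 2) * N * N) ^ 2 =
      (deriv σ t + ((α + β) / 2) ^ 2) * (deriv σ t + ((β - α) / 2) ^ 2) *
        (deriv σ t + N ^ 2) * (deriv σ t + N ^ 2) := by
  set τ : Matrix (Fin 2) (Fin 2) ℝ →L[ℝ] ℝ := (traceLinearMap (Fin 2) ℝ ℝ).toContinuousLinearMap
  have hτ : ∀ X Y, τ (X * Y) = τ (Y * X) := trace_mul_comm
  have hdσ : ∀ t ∈ s, HasDerivAt σ ((A t * A₀ t).trace + (A t * A₁ t).trace - N ^ 2) t := by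
    intro t ht
    have hd := ((h.hasDerivAt_hamiltonian τ hτ hs h₀ h₁ ht).sub
      ((hasDerivAt_id t).const_mul (N ^ 2))).add_const (N ^ 2 / 2 + (β ^ 2 - α ^ 2) / 8)
    rw [mul_one] at hd
    refine hd.congr_of_eventuallyEq ?_
    filter_upwards [hs.mem_nhds ht] with r hr using hσ r hr
  have hddσ : ∀ t ∈ s,
      HasDerivAt (deriv σ) (-(A t * ⁅A₁ t, A₀ t⁆).trace / (t * (t - 1))) t := by
    intro t ht
    have hd := (h.hasDerivAt_deriv_hamiltonian τ hτ hs h₀ h₁ ht).sub_const (N ^ 2)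
    refine hd.congr_of_eventuallyEq ?_
    filter_upwards [hs.mem_nhds ht] with r hr
    rw [(hdσ r hr).deriv, (h.hasDerivAt_hamiltonian τ hτ hs h₀ h₁ hr).deriv]
    rfl
  refine ⟨fun t ht => (hdσ t ht).differentiableAt.differentiableWithinAt,
    fun t ht => (hddσ t ht).differentiableAt.differentiableWithinAt, fun t ht => ?_⟩
  have ht₀ : t ≠ 0 := fun h => h₀ (h ▸ ht)
  have ht₁ : t - 1 ≠ 0 := sub_ne_zero.2 fun h => h₁ (h ▸ ht)
  rw [(hddσ t ht).deriv, (hdσ t ht).deriv, hσ t ht, hamiltonian,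
    mul_div_cancel₀ _ (mul_ne_zero ht₀ ht₁), neg_sq,
    sq_trace_mul_lie_eq (trA₀ t ht) (trA₁ t ht) (trA t ht) ((h.add_eq t ht).symm ▸ detM)
      (detA₀ t ht) (detA₁ t ht) (detA t ht)]
  ring

end Schlesinger

section EndpointDerivative

variable {𝕜 : Type*} [NontriviallyNormedField 𝕜]

theorem hasDerivAt_det {m : Type*} [Fintype m] [DecidableEq m] {A : 𝕜 → Matrix m m 𝕜}
    {A' : Matrix m m 𝕜} {t : 𝕜} (hA : ∀ i j, HasDerivAt (fun τ => A τ i j) (A' i j) t) :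
    HasDerivAt (fun τ => (A τ).det) (adjugate (A t) * A').trace t := by
  let D : ContinuousMultilinearMap 𝕜 (fun _ : m => m → 𝕜) 𝕜 :=
    { (detRowAlternating (n := m) (R := 𝕜)).toMultilinearMap with
      cont := Continuous.matrix_det continuous_id }
  have hrow (i : m) : (updateRow (A t) i (A'.row i)).det = (A' * adjugate (A t)) i i := by
    rw [← cramer_transpose_apply, cramer_eq_adjugate_mulVec, ← adjugate_transpose,
      mulVec_transpose]
    rfl
  refine ((D.hasFDerivAt fun i j => A t i j).comp_hasDerivAt t
    (hasDerivAt_pi.2 fun i => hasDerivAt_pi.2 (hA i))).congr_deriv ?_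
  rw [trace_mul_comm]
  exact (D.linearDeriv_apply _ _).trans (Finset.sum_congr rfl fun i _ => hrow i)

theorem differentiableAt_inv_apply {m : Type*} [Fintype m] [DecidableEq m]
    {A : 𝕜 → Matrix m m 𝕜} {t : 𝕜} (hA : ∀ i j, DifferentiableAt 𝕜 (fun τ => A τ i j) t)
    (hdet : (A t).det ≠ 0) (i j : m) : DifferentiableAt 𝕜 (fun τ => (A τ)⁻¹ i j) t := by
  simp only [inv_def, Ring.inverse_eq_inv', Matrix.smul_apply, smul_eq_mul, adjugate_apply]
  have hadj : ∀ k l, DifferentiableAt 𝕜 (fun τ => (A τ).updateRow j (Pi.single i 1) k l) t := by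
    intro k l
    simp only [updateRow_apply]
    split_ifs
    · exact differentiableAt_const _
    · exact hA k l
  exact ((hasDerivAt_det fun k l => (hA k l).hasDerivAt).differentiableAt.fun_inv hdet).mul
    (hasDerivAt_det fun k l => (hadj k l).hasDerivAt).differentiableAt

/-- Coefficientwise differentiability at `t` of a family of polynomials of bounded degree. -/
def HasCoeffDerivAt (f : 𝕜 → 𝕜[X]) (f' : 𝕜[X]) (t : 𝕜) : Prop :=
  (∃ N, ∀ τ, (f τ).natDegree ≤ N) ∧ ∀ k, HasDerivAt (fun τ => (f τ).coeff k) (f'.coeff k) t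

/-- Pointwise differentiability at `t` of a family of linear functionals on polynomials. -/
def HasWeakDerivAt (ℓ : 𝕜 → 𝕜[X] →ₗ[𝕜] 𝕜) (ℓ' : 𝕜[X] →ₗ[𝕜] 𝕜) (t : 𝕜) : Prop :=
  ∀ f, HasDerivAt (fun τ => ℓ τ f) (ℓ' f) t

namespace HasCoeffDerivAt

variable {f g : 𝕜 → 𝕜[X]} {f' g' : 𝕜[X]} {t : 𝕜}

theorem const (p : 𝕜[X]) (t : 𝕜) : HasCoeffDerivAt (fun _ => p) 0 t :=
  ⟨⟨_, fun _ => le_rfl⟩, fun k => by simpa using hasDerivAt_const t (p.coeff k)⟩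

theorem const_sub (hf : HasCoeffDerivAt f f' t) (p : 𝕜[X]) :
    HasCoeffDerivAt (fun τ => p - f τ) (-f') t := by
  obtain ⟨⟨N, hN⟩, hf⟩ := hf
  refine ⟨⟨max p.natDegree N, fun τ => ?_⟩, fun k => ?_⟩
  · exact (natDegree_sub_le _ _).trans (max_le_max le_rfl (hN τ))
  · simp only [coeff_sub, coeff_neg]
    exact (hf k).const_sub _

theorem mul (hf : HasCoeffDerivAt f f' t) (hg : HasCoeffDerivAt g g' t) :
    HasCoeffDerivAt (fun τ => f τ * g τ) (f' * g t + f t * g') t := by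
  obtain ⟨⟨N, hN⟩, hf⟩ := hf
  obtain ⟨⟨N', hN'⟩, hg⟩ := hg
  refine ⟨⟨N + N', fun τ => natDegree_mul_le.trans (add_le_add (hN τ) (hN' τ))⟩, fun k => ?_⟩
  simp only [coeff_mul, coeff_add, ← Finset.sum_add_distrib]
  exact HasDerivAt.fun_sum fun p _ => (hf p.1).mul (hg p.2)

theorem natDegree_le (hf : HasCoeffDerivAt f f' t) {N : ℕ} (hN : ∀ τ, (f τ).natDegree ≤ N) :
    f'.natDegree ≤ N := by
  refine natDegree_le_iff_coeff_eq_zero.2 fun k hk => (hf.2 k).unique ?_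
  simp only [fun τ => coeff_eq_zero_of_natDegree_lt ((hN τ).trans_lt hk), hasDerivAt_const]

theorem map {ℓ : 𝕜 → 𝕜[X] →ₗ[𝕜] 𝕜} {ℓ' : 𝕜[X] →ₗ[𝕜] 𝕜} (hf : HasCoeffDerivAt f f' t)
    (hℓ : HasWeakDerivAt ℓ ℓ' t) :
    HasDerivAt (fun τ => ℓ τ (f τ)) (ℓ t f' + ℓ' (f t)) t := by
  obtain ⟨N, hN⟩ := hf.1
  have hexpand (φ : 𝕜[X] →ₗ[𝕜] 𝕜) {p : 𝕜[X]} (hp : p.natDegree ≤ N) :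
      φ p = ∑ k ∈ Finset.range (N + 1), p.coeff k * φ (X ^ k) := by
    conv_lhs => rw [p.as_sum_range_C_mul_X_pow' (Nat.lt_succ_iff.2 hp)]
    simp only [map_sum, map_C_mul_eq]
  simp only [hexpand _ (hN _), hexpand _ (hf.natDegree_le hN), ← Finset.sum_add_distrib]
  exact HasDerivAt.fun_sum fun k _ => (hf.2 k).mul (hℓ _)

end HasCoeffDerivAt

variable {n : ℕ} {ℓ : 𝕜 → 𝕜[X] →ₗ[𝕜] 𝕜} {t w : 𝕜}

theorem exists_hasCoeffDerivAt_representer {φ : 𝕜 → 𝕜[X] →ₗ[𝕜] 𝕜} {ℓ' φ' : 𝕜[X] →ₗ[𝕜] 𝕜}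
    (hℓ : HasWeakDerivAt ℓ ℓ' t) (hφ : HasWeakDerivAt φ φ' t) (hdet : (hankel (ℓ t) n).det ≠ 0) :
    ∃ f' ∈ degreeLT 𝕜 n, HasCoeffDerivAt (fun τ => representer (ℓ τ) n (φ τ)) f' t := by
  set v : 𝕜 → Fin n → 𝕜 := fun τ => (hankel (ℓ τ) n)⁻¹ *ᵥ fun j => φ τ (X ^ (j : ℕ))
  have hv (i : Fin n) : DifferentiableAt 𝕜 (fun τ => v τ i) t := by
    simp only [v, mulVec, dotProduct]
    refine DifferentiableAt.fun_sum fun j _ => .fun_mul ?_ (hφ _).differentiableAt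
    exact differentiableAt_inv_apply (fun i j => (hℓ _).differentiableAt) hdet i j
  refine ⟨_, ((degreeLTEquiv 𝕜 n).symm fun i => deriv (fun τ => v τ i) t).2, ⟨n, fun τ => ?_⟩,
    fun k => ?_⟩
  · exact natDegree_le_of_degree_le (mem_degreeLT.1 (representer_mem (ℓ τ) n (φ τ))).le
  · rcases lt_or_ge k n with hk | hk
    · have h := (hv ⟨k, hk⟩).hasDerivAt
      rw [← coeff_degreeLTEquiv_symm (fun i => deriv (fun τ => v τ i) t) ⟨k, hk⟩] at h
      exact h.congr_of_eventuallyEq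
        (.of_forall fun τ => coeff_degreeLTEquiv_symm (v τ) ⟨k, hk⟩)
    · simp only [fun τ => coeff_eq_zero_of_mem_degreeLT (representer_mem (ℓ τ) n (φ τ)) hk,
        coeff_eq_zero_of_mem_degreeLT (Subtype.prop _) hk, hasDerivAt_const]

theorem eq_C_mul_cdKernel_of_hasCoeffDerivAt {f : 𝕜 → 𝕜[X]} {f' : 𝕜[X]}
    (hℓ : HasWeakDerivAt ℓ (-(w • leval t)) t) (hdet : (hankel (ℓ t) n).det ≠ 0)
    (hf : HasCoeffDerivAt f f' t) (hf' : f' ∈ degreeLT 𝕜 n)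
    (hconst : ∀ g ∈ degreeLT 𝕜 n, HasDerivAt (fun τ => ℓ τ (f τ * g)) 0 t) :
    f' = C (w * (f t).eval t) * cdKernel (ℓ t) n t := by
  have hK := cdKernel_mem (ℓ t) n t
  rw [← smul_eq_C_mul]
  refine sub_eq_zero.1 (eq_zero_of_map_mul_X_pow_eq_zero hdet
    (Submodule.sub_mem _ hf' (Submodule.smul_mem _ _ hK)) fun k hk => ?_)
  have hX := X_pow_mem_degreeLT (F := 𝕜) hk
  have h := ((hf.mul (.const (X ^ k) t)).map hℓ).unique (hconst _ hX)
  simp only [mul_zero, add_zero, LinearMap.neg_apply, LinearMap.smul_apply, leval_apply, eval_mul,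
    smul_eq_mul] at h
  rw [sub_mul, map_sub, smul_mul_assoc, map_smul, map_cdKernel_mul hdet t hX, smul_eq_mul]
  linear_combination h

variable (hℓ : HasWeakDerivAt ℓ (-(w • leval t)) t)
include hℓ

theorem hasDerivAt_det_hankel (hdet : (hankel (ℓ t) n).det ≠ 0) :
    HasDerivAt (fun τ => (hankel (ℓ τ) n).det)
      (-((hankel (ℓ t) n).det * (w * (cdKernel (ℓ t) n t).eval t))) t := by
  set A := hankel (ℓ t) n
  set v : Fin n → 𝕜 := fun i => t ^ (i : ℕ)
  refine (hasDerivAt_det (A := fun τ => hankel (ℓ τ) n) (A' := -(w • vecMulVec v v))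
    fun i j => (hℓ (X ^ ((i : ℕ) + (j : ℕ)))).congr_deriv ?_).congr_deriv ?_
  · simp [v, vecMulVec_apply, pow_add]
  · have hK : (cdKernel (ℓ t) n t).eval t = (A⁻¹ *ᵥ v) ⬝ᵥ v := by
      simpa [v, A, cdKernel, representer, dotProduct] using
        map_degreeLTEquiv_symm (leval t) (A⁻¹ *ᵥ v)
    have hadj : adjugate A = A.det • A⁻¹ := by
      rw [inv_def, Ring.inverse_eq_inv', smul_smul, mul_inv_cancel₀ hdet, one_smul]
    rw [hK, hadj, mul_neg, trace_neg, Matrix.mul_smul, mul_vecMulVec, trace_smul,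
      trace_vecMulVec, smul_mulVec, smul_dotProduct, smul_eq_mul, smul_eq_mul]
    ring

variable (hdet : ∀ᶠ τ in nhds t, (hankel (ℓ τ) n).det ≠ 0)
include hdet

theorem hasCoeffDerivAt_orthPoly :
    HasCoeffDerivAt (fun τ => orthPoly (ℓ τ) n)
      (C (w * (orthPoly (ℓ t) n).eval t) * cdKernel (ℓ t) n t) t := by
  obtain ⟨f', hf', h⟩ := exists_hasCoeffDerivAt_representer
    (φ := fun τ => ℓ τ ∘ₗ LinearMap.mulLeft 𝕜 (X ^ n))
    (φ' := -(w • leval t) ∘ₗ LinearMap.mulLeft 𝕜 (X ^ n)) hℓ (fun f => hℓ _) hdet.self_of_nhds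
  have hP : HasCoeffDerivAt (fun τ => orthPoly (ℓ τ) n) (-f') t := h.const_sub (X ^ n)
  rwa [eq_C_mul_cdKernel_of_hasCoeffDerivAt hℓ hdet.self_of_nhds hP (neg_mem hf')
    fun g hg => (hasDerivAt_const t 0).congr_of_eventuallyEq ?_] at hP
  filter_upwards [hdet] with τ hτ using map_orthPoly_mul hτ hg

theorem hasCoeffDerivAt_prevOrthPoly :
    HasCoeffDerivAt (fun τ => prevOrthPoly (ℓ τ) n)
      (C (w * (prevOrthPoly (ℓ t) n).eval t) * cdKernel (ℓ t) n t) t := by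
  obtain ⟨f', hf', h⟩ := exists_hasCoeffDerivAt_representer (φ := fun _ => lcoeff 𝕜 (n - 1))
    (φ' := 0) hℓ (fun f => hasDerivAt_const t _) hdet.self_of_nhds
  have hQ : HasCoeffDerivAt (fun τ => prevOrthPoly (ℓ τ) n) f' t := h
  rwa [eq_C_mul_cdKernel_of_hasCoeffDerivAt hℓ hdet.self_of_nhds hQ hf'
    fun g hg => (hasDerivAt_const t (g.coeff (n - 1))).congr_of_eventuallyEq ?_] at hQ
  filter_upwards [hdet] with τ hτ using map_prevOrthPoly_mul hτ hg

open scoped Matrix.Norms.Operator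

theorem hasDerivAt_residue [NeZero (2 : 𝕜)] {μ : 𝕜 → 𝕜[X] →ₗ[𝕜] 𝕜} {a s : 𝕜} (hts : t ≠ s)
    (hμ : HasWeakDerivAt μ (-((a * w / (t - s)) • leval t)) t)
    (hpole : ∀ f, μ t ((X - C s) * f) = a * ℓ t f) :
    HasDerivAt (fun τ => residue (ℓ τ) n (μ τ) a)
      ((t - s)⁻¹ • ⁅residue (ℓ t) n (w • leval t) 0, residue (ℓ t) n (μ t) a⁆) t := by
  have hℓt := hdet.self_of_nhds
  have hP := hasCoeffDerivAt_orthPoly hℓ hdet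
  have hQ := hasCoeffDerivAt_prevOrthPoly hℓ hdet
  have hPK := eq_div_of_mul_eq (sub_ne_zero.2 hts)
    ((mul_comm _ _).trans (sub_mul_map_orthPoly_mul_cdKernel hℓt hpole t))
  have hQK := eq_div_of_mul_eq (sub_ne_zero.2 hts)
    ((mul_comm _ _).trans (sub_mul_map_prevOrthPoly_mul_cdKernel hℓt hpole t))
  have hPP := (hP.mul hP).map hμ
  have hPQ := (hP.mul hQ).map hμ
  have hQQ := (hQ.mul hQ).map hμ
  simp only [mul_assoc, mul_left_comm _ (C _), map_add, map_C_mul_eq,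
    mul_comm (cdKernel (ℓ t) n t), hPK, hQK, LinearMap.neg_apply, LinearMap.smul_apply,
    leval_apply, smul_eq_mul, eval_mul] at hPP hPQ hQQ
  rw [lie_residue_smul_leval]
  refine hasDerivAt_pi.2 (Fin.forall_fin_two.2 ⟨
    hasDerivAt_pi.2 (Fin.forall_fin_two.2
      ⟨(hPQ.const_sub (a / 2)).congr_deriv ?_, hPP.congr_deriv ?_⟩),
    hasDerivAt_pi.2 (Fin.forall_fin_two.2
      ⟨hQQ.neg.congr_deriv ?_, (hPQ.sub_const (a / 2)).congr_deriv ?_⟩)⟩)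
  all_goals
    simp only [Matrix.smul_apply, smul_eq_mul, of_apply, cons_val', cons_val_zero, cons_val_one,
      cons_val_fin_one]
    ring

end EndpointDerivative
section JacobiWeight

/-- The Jacobi weight on `[0, 1]`. -/
noncomputable def weight (α β x : ℝ) : ℝ := x ^ α * (1 - x) ^ β

/-- The linear functional `f ↦ ∫ x in t..1, f(x) g(x)` on polynomials, given by its moments so that
it is linear whether or not `g` is integrable. -/
noncomputable def integralFunctional (g : ℝ → ℝ) (t : ℝ) : ℝ[X] →ₗ[ℝ] ℝ :=
  lsum fun k => LinearMap.lsmul ℝ ℝ (∫ x in t..1, x ^ k * g x)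

theorem integralFunctional_eq_sum (g : ℝ → ℝ) (t : ℝ) (f : ℝ[X]) :
    integralFunctional g t f =
      ∑ k ∈ f.support, f.coeff k * ∫ x in t..1, x ^ k * g x := by
  rw [integralFunctional, lsum_apply, sum_def]
  exact Finset.sum_congr rfl fun k _ => mul_comm _ _

section

variable {g : ℝ → ℝ} {t : ℝ} (hg : IntervalIntegrable g volume t 1)
include hg

theorem integralFunctional_apply (f : ℝ[X]) :
    integralFunctional g t f = ∫ x in t..1, f.eval x * g x := by
  simp only [integralFunctional_eq_sum, ← intervalIntegral.integral_const_mul, eval_eq_sum,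
    sum_def, Finset.sum_mul, mul_assoc]
  exact (intervalIntegral.integral_finsetSum fun k _ =>
    (hg.continuousOn_mul (continuous_pow k).continuousOn).const_mul _).symm

theorem hasWeakDerivAt_integralFunctional (hgm : Measurable g) (hgc : ContinuousAt g t) :
    HasWeakDerivAt (integralFunctional g) (-(g t • leval t)) t := by
  intro f
  have hmoment (k : ℕ) :
      HasDerivAt (fun τ => ∫ x in τ..1, x ^ k * g x) (-(t ^ k * g t)) t :=
    integral_hasDerivAt_left (hg.continuousOn_mul (continuous_pow k).continuousOn)
      ((measurable_id.pow_const k).mul hgm).stronglyMeasurable.stronglyMeasurableAtFilter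
      ((continuousAt_id.pow k).mul hgc)
  simp only [integralFunctional_eq_sum]
  refine (HasDerivAt.fun_sum fun k _ => (hmoment k).const_mul _).congr_deriv ?_
  simp only [LinearMap.neg_apply, LinearMap.smul_apply, leval_apply, smul_eq_mul, eval_eq_sum,
    sum_def, Finset.mul_sum, ← Finset.sum_neg_distrib]
  exact Finset.sum_congr rfl fun k _ => by ring

end

theorem measurable_weight (α β : ℝ) : Measurable (weight α β) := by
  unfold weight
  fun_prop

theorem weight_pos (α β : ℝ) {x : ℝ} (hx : x ∈ Set.Ioo 0 1) : 0 < weight α β x :=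
  mul_pos (Real.rpow_pos_of_pos hx.1 _) (Real.rpow_pos_of_pos (sub_pos.2 hx.2) _)

theorem weight_add_one_left (α β : ℝ) {x : ℝ} (hx : x ≠ 0) :
    weight (α + 1) β x = x * weight α β x := by
  rw [weight, weight, Real.rpow_add_one hx]
  ring

theorem weight_add_one_right (α β : ℝ) {x : ℝ} (hx : 1 - x ≠ 0) :
    weight α (β + 1) x = (1 - x) * weight α β x := by
  rw [weight, weight, Real.rpow_add_one hx]
  ring

theorem hasDerivAt_weight (α β : ℝ) {x : ℝ} (hx : x ∈ Set.Ioo 0 1) :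
    HasDerivAt (weight α β) (α * weight (α - 1) β x - β * weight α (β - 1) x) x := by
  refine ((Real.hasDerivAt_rpow_const (Or.inl hx.1.ne')).mul
    (((hasDerivAt_id x).const_sub 1).rpow_const (Or.inl (sub_pos.2 hx.2).ne'))).congr_deriv ?_
  simp only [weight, id_eq]
  ring

variable {α β t : ℝ}

theorem continuousOn_rpow_uIcc (α : ℝ) (ht : t ∈ Set.Ioo 0 1) :
    ContinuousOn (fun x : ℝ => x ^ α) (Set.uIcc t 1) := by
  rw [Set.uIcc_of_le ht.2.le]
  exact continuousOn_id.rpow_const fun x hx => Or.inl (ht.1.trans_le hx.1).ne'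

theorem intervalIntegrable_weight (α : ℝ) (hβ : -1 < β) (ht : t ∈ Set.Ioo 0 1) :
    IntervalIntegrable (weight α β) volume t 1 := by
  have hright : IntervalIntegrable (fun x : ℝ => (1 - x) ^ β) volume t 1 := by
    simpa using (intervalIntegrable_rpow' (a := 1 - t) (b := 0) hβ).comp_sub_left 1
  exact hright.continuousOn_mul (continuousOn_rpow_uIcc α ht)

/-- The functional `f ↦ ∫ x in t..1, f(x) x ^ α (1 - x) ^ β` whose Hankel determinant is
`jacobiHankel`. -/
noncomputable def jacobiFunctional (α β t : ℝ) : ℝ[X] →ₗ[ℝ] ℝ :=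
  integralFunctional (weight α β) t

theorem jacobiHankel_eq_det_hankel (α β : ℝ) (n : ℕ) (ht : t ∈ Set.Ioo 0 1) :
    jacobiHankel n t α β = (hankel (jacobiFunctional α β t) n).det := by
  refine congrArg det (ext fun i j => ?_)
  have hmoment : jacobiFunctional α β t (X ^ ((i : ℕ) + (j : ℕ)))
      = ∫ x in t..1, x ^ ((i : ℕ) + (j : ℕ)) * weight α β x := by
    rw [jacobiFunctional, integralFunctional_eq_sum, support_X_pow]
    simp
  refine Eq.trans ?_ hmoment.symm
  refine intervalIntegral.integral_congr fun x hx => ?_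
  rw [Set.uIcc_of_le ht.2.le] at hx
  simp only [weight]
  rw [Real.rpow_add (ht.1.trans_le hx.1), ← Nat.cast_add, Real.rpow_natCast, mul_assoc]

section

variable (α) (hβ : -1 < β) (ht : t ∈ Set.Ioo 0 1)
include hβ ht

theorem jacobiFunctional_apply (f : ℝ[X]) :
    jacobiFunctional α β t f = ∫ x in t..1, f.eval x * weight α β x :=
  integralFunctional_apply (intervalIntegrable_weight α hβ ht) f

theorem hasWeakDerivAt_jacobiFunctional :
    HasWeakDerivAt (jacobiFunctional α β) (-(weight α β t • leval t)) t :=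
  hasWeakDerivAt_integralFunctional (intervalIntegrable_weight α hβ ht) (measurable_weight α β)
    (hasDerivAt_weight α β ht).continuousAt

theorem jacobiFunctional_add_one_left (f : ℝ[X]) :
    jacobiFunctional (α + 1) β t f = jacobiFunctional α β t (X * f) := by
  rw [jacobiFunctional_apply _ hβ ht, jacobiFunctional_apply _ hβ ht]
  refine intervalIntegral.integral_congr fun x hx => ?_
  rw [Set.uIcc_of_le ht.2.le] at hx
  simp only [weight_add_one_left α β (ht.1.trans_le hx.1).ne', eval_mul, eval_X]
  ring

theorem jacobiFunctional_add_one_right (f : ℝ[X]) :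
    jacobiFunctional α (β + 1) t f = jacobiFunctional α β t ((1 - X) * f) := by
  rw [jacobiFunctional_apply _ hβ ht, jacobiFunctional_apply _ (by linarith) ht]
  refine intervalIntegral.integral_congr_Ioo_of_le ht.2.le fun x hx => ?_
  simp only [weight_add_one_right α β (sub_pos.2 hx.2).ne', eval_mul, eval_sub, eval_one, eval_X]
  ring

theorem jacobiFunctional_derivative (f : ℝ[X]) :
    jacobiFunctional α (β + 1) t (derivative f) + α * jacobiFunctional (α - 1) (β + 1) t f
      - (β + 1) * jacobiFunctional α β t f = -(f.eval t * weight α (β + 1) t) := by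
  have hβ' : -1 < β + 1 := by linarith
  have hint (p : ℝ[X]) (α : ℝ) {β : ℝ} (hβ : -1 < β) :
      IntervalIntegrable (fun x => p.eval x * weight α β x) volume t 1 :=
    (intervalIntegrable_weight α hβ ht).continuousOn_mul p.continuous.continuousOn
  have hderiv : ∀ x ∈ Set.Ioo t 1, HasDerivAt (fun x => f.eval x * weight α (β + 1) x)
      ((derivative f).eval x * weight α (β + 1) x + α * (f.eval x * weight (α - 1) (β + 1) x)
        - (β + 1) * (f.eval x * weight α β x)) x := by
    intro x hx
    refine ((f.hasDerivAt x).mul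
      (hasDerivAt_weight α (β + 1) ⟨ht.1.trans hx.1, hx.2⟩)).congr_deriv ?_
    rw [add_sub_cancel_right]
    ring
  have hcont : ContinuousOn (fun x => f.eval x * weight α (β + 1) x) (Set.Icc t 1) := by
    refine f.continuous.continuousOn.mul (ContinuousOn.mul ?_ ?_)
    · simpa only [Set.uIcc_of_le ht.2.le] using continuousOn_rpow_uIcc α ht
    · exact (continuous_const.sub continuous_id).continuousOn.rpow_const fun x _ =>
        Or.inr (by linarith)
  have hzero : weight α (β + 1) 1 = 0 := by
    rw [weight, sub_self, Real.zero_rpow (by linarith), mul_zero]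
  rw [jacobiFunctional_apply _ hβ' ht, jacobiFunctional_apply _ hβ' ht,
    jacobiFunctional_apply _ hβ ht, ← intervalIntegral.integral_const_mul,
    ← intervalIntegral.integral_const_mul,
    ← intervalIntegral.integral_add (hint _ _ hβ') ((hint _ _ hβ').const_mul _),
    ← intervalIntegral.integral_sub ((hint _ _ hβ').add ((hint _ _ hβ').const_mul _))
      ((hint _ _ hβ).const_mul _),
    integral_eq_sub_of_hasDerivAt_of_le ht.2.le hcont hderiv
      (((hint _ _ hβ').add ((hint _ _ hβ').const_mul _)).sub ((hint _ _ hβ).const_mul _)),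
    hzero, mul_zero, zero_sub]

theorem jacobiFunctional_mul_self_pos {f : ℝ[X]} (hf : f ≠ 0) :
    0 < jacobiFunctional α β t (f * f) := by
  have hint := (intervalIntegrable_weight α hβ ht).continuousOn_mul
    (f * f).continuous.continuousOn
  rw [jacobiFunctional_apply α hβ ht,
    intervalIntegral.integral_pos_iff_support_of_nonneg_ae' ?_ hint]
  · refine ⟨ht.2, ?_⟩
    have hroots : volume {x | f.IsRoot x} = 0 :=
      (finite_setOfPred_isRoot hf).measure_zero volume
    have hsub : Set.Ioo t 1 \ {x | f.IsRoot x} ⊆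
        Function.support (fun x => (f * f).eval x * weight α β x) ∩ Set.Ioc t 1 :=
      fun x hx => ⟨mul_ne_zero (by simpa using hx.2)
        (weight_pos α β ⟨ht.1.trans hx.1.1, hx.1.2⟩).ne', Set.Ioo_subset_Ioc_self hx.1⟩
    refine lt_of_lt_of_le ?_ (measure_mono hsub)
    rw [measure_sdiff_null hroots, Real.volume_Ioo]
    simpa using ht.2
  · rw [Set.uIoc_of_le ht.2.le]
    refine ae_restrict_of_forall_mem measurableSet_Ioc fun x hx => ?_
    simp only [Pi.zero_apply, eval_mul]
    exact mul_nonneg (mul_self_nonneg _) (mul_nonneg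
      (Real.rpow_nonneg (ht.1.trans hx.1).le _) (Real.rpow_nonneg (sub_nonneg.2 hx.2) _))

theorem det_hankel_jacobiFunctional_ne_zero (n : ℕ) :
    (hankel (jacobiFunctional α β t) n).det ≠ 0 :=
  det_hankel_ne_zero _ n fun _ _ hf => (jacobiFunctional_mul_self_pos α hβ ht hf).ne'

end

/-- The functional `f ↦ α ∫ x in t..1, f(x) x ^ (α - 1) (1 - x) ^ β`, that is, `α` times the
quotient of `jacobiFunctional` by `X`. -/
noncomputable def functionalZero (α β t : ℝ) : ℝ[X] →ₗ[ℝ] ℝ :=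
  α • jacobiFunctional (α - 1) β t

/-- `β` times the quotient of `jacobiFunctional` by `X - 1`. The integral
`β ∫ x in t..1, f(x) x ^ α (1 - x) ^ β / (x - 1)` diverges for `β ≤ 0`, so it is regularised through
its value after an integration by parts. -/
noncomputable def functionalOne (α β t : ℝ) : ℝ[X] →ₗ[ℝ] ℝ :=
  -(weight α β t • leval t + jacobiFunctional α β t ∘ₗ derivative + functionalZero α β t)

theorem functionalZero_add_functionalOne (α β t : ℝ) :
    functionalZero α β t + functionalOne α β t + weight α β t • leval t =
      -(jacobiFunctional α β t ∘ₗ derivative) := by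
  rw [functionalOne]
  abel

section

variable (α) (hβ : -1 < β) (ht : t ∈ Set.Ioo 0 1)
include hβ ht

theorem functionalZero_X_sub_C_mul (f : ℝ[X]) :
    functionalZero α β t ((X - C 0) * f) = α * jacobiFunctional α β t f := by
  rw [functionalZero, LinearMap.smul_apply, smul_eq_mul, C_0, sub_zero,
    ← jacobiFunctional_add_one_left _ hβ ht, sub_add_cancel]

theorem functionalOne_X_sub_C_mul (f : ℝ[X]) :
    functionalOne α β t ((X - C 1) * f) = β * jacobiFunctional α β t f := by
  have hparts := jacobiFunctional_derivative α hβ ht f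
  rw [jacobiFunctional_add_one_right _ hβ ht, jacobiFunctional_add_one_right _ hβ ht,
    weight_add_one_right _ _ (sub_pos.2 ht.2).ne'] at hparts
  have hneg : (X - C 1) * f = -((1 - X) * f) := by rw [C_1]; ring
  have hderiv : derivative ((1 - X) * f) = (1 - X) * derivative f - f := by
    rw [derivative_mul, derivative_sub, derivative_X, derivative_one]
    ring
  simp only [hneg, map_neg, functionalOne, functionalZero, LinearMap.neg_apply,
    LinearMap.add_apply, LinearMap.smul_apply, LinearMap.comp_apply, leval_apply, smul_eq_mul,
    hderiv, map_sub, eval_mul, eval_sub, eval_one, eval_X]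
  linear_combination hparts

theorem hasWeakDerivAt_functionalZero :
    HasWeakDerivAt (functionalZero α β) (-((α * weight α β t / (t - 0)) • leval t)) t := by
  intro f
  refine ((hasWeakDerivAt_jacobiFunctional (α - 1) hβ ht f).const_smul α).congr_deriv ?_
  have hw := weight_add_one_left (α - 1) β ht.1.ne'
  have ht₀ : t ≠ 0 := ht.1.ne'
  rw [sub_add_cancel] at hw
  simp only [LinearMap.neg_apply, LinearMap.smul_apply, leval_apply, smul_eq_mul, hw]
  field

theorem hasWeakDerivAt_functionalOne :
    HasWeakDerivAt (functionalOne α β) (-((β * weight α β t / (t - 1)) • leval t)) t := by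
  intro f
  refine ((((hasDerivAt_weight α β ht).mul (f.hasDerivAt t)).add
    (hasWeakDerivAt_jacobiFunctional α hβ ht (derivative f))).add
    (hasWeakDerivAt_functionalZero α hβ ht f)).neg.congr_deriv ?_
  have hw₀ := weight_add_one_left (α - 1) β ht.1.ne'
  have hw₁ := weight_add_one_right α (β - 1) (sub_pos.2 ht.2).ne'
  have ht₀ : t ≠ 0 := ht.1.ne'
  have ht₁ : t - 1 ≠ 0 := (sub_neg.2 ht.2).ne
  rw [sub_add_cancel] at hw₀ hw₁
  have hdiv₀ : α * weight α β t / (t - 0) = α * weight (α - 1) β t := by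
    rw [hw₀]; field
  have hdiv₁ : β * weight α β t / (t - 1) = -(β * weight α (β - 1) t) := by
    rw [hw₁]; field
  rw [hdiv₀, hdiv₁]
  simp only [LinearMap.neg_apply, LinearMap.smul_apply, leval_apply, smul_eq_mul]
  ring

end

end JacobiWeight

section JacobiSchlesinger

variable (α β : ℝ) (n : ℕ)

/-- The residue at `0` of the Fuchsian system of the orthogonal polynomials of the Jacobi weight
on `[t, 1]`. -/
noncomputable def residueZero (t : ℝ) : Matrix (Fin 2) (Fin 2) ℝ :=
  residue (jacobiFunctional α β t) n (functionalZero α β t) α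

/-- The residue at `1` of the Fuchsian system of the orthogonal polynomials of the Jacobi weight
on `[t, 1]`. -/
noncomputable def residueOne (t : ℝ) : Matrix (Fin 2) (Fin 2) ℝ :=
  residue (jacobiFunctional α β t) n (functionalOne α β t) β

/-- The residue at the endpoint `t` of the Fuchsian system of the orthogonal polynomials of the
Jacobi weight on `[t, 1]`. -/
noncomputable def residueEndpoint (t : ℝ) : Matrix (Fin 2) (Fin 2) ℝ :=
  residue (jacobiFunctional α β t) n (weight α β t • leval t) 0

variable {β t : ℝ} (hβ : -1 < β)
include hβ

theorem det_residueZero (ht : t ∈ Set.Ioo 0 1) : (residueZero α β n t).det = -(α / 2) ^ 2 :=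
  det_residue (det_hankel_jacobiFunctional_ne_zero α hβ ht n) (functionalZero_X_sub_C_mul α hβ ht)

theorem det_residueOne (ht : t ∈ Set.Ioo 0 1) : (residueOne α β n t).det = -(β / 2) ^ 2 :=
  det_residue (det_hankel_jacobiFunctional_ne_zero α hβ ht n) (functionalOne_X_sub_C_mul α hβ ht)

theorem det_residueEndpoint (ht : t ∈ Set.Ioo 0 1) : (residueEndpoint α β n t).det = 0 := by
  have h := det_residue (μ := weight α β t • leval t) (a := 0) (s := t)
    (det_hankel_jacobiFunctional_ne_zero α hβ ht n) (fun f => by simp)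
  rwa [zero_div, zero_pow two_ne_zero, neg_zero] at h

theorem residueZero_add_residueOne_add_residueEndpoint (ht : t ∈ Set.Ioo 0 1) :
    residueZero α β n t + residueOne α β n t + residueEndpoint α β n t =
      !![n + (α + β) / 2, 0; 0, -(n + (α + β) / 2)] := by
  rw [residueZero, residueOne, residueEndpoint, ← residue_add, ← residue_add,
    functionalZero_add_functionalOne, add_zero,
    residue_neg_comp_derivative (det_hankel_jacobiFunctional_ne_zero α hβ ht n)]

theorem mul_deriv_log_jacobiHankel (ht : t ∈ Set.Ioo 0 1) :
    t * (t - 1) * deriv (fun s => Real.log (jacobiHankel n s α β)) t =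
      hamiltonian trace (residueZero α β n) (residueOne α β n) (residueEndpoint α β n) t := by
  have hdet := det_hankel_jacobiFunctional_ne_zero α hβ ht n
  have hD := hasDerivAt_det_hankel (hasWeakDerivAt_jacobiFunctional α hβ ht) hdet
  have hlog := (hD.log hdet).congr_of_eventuallyEq
    (f₁ := fun s => Real.log (jacobiHankel n s α β)) (by
      filter_upwards [isOpen_Ioo.mem_nhds ht] with s hs
      rw [jacobiHankel_eq_det_hankel α β n hs])
  have htrace := trace_residue_mul_div_add hdet (functionalZero_X_sub_C_mul α hβ ht)
    (functionalOne_X_sub_C_mul α hβ ht) (functionalZero_add_functionalOne α β t) ht.1.ne' ht.2.ne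
  have ht₀ : t ≠ 0 := ht.1.ne'
  have ht₁ : t - 1 ≠ 0 := (sub_neg.2 ht.2).ne
  rw [hlog.deriv, neg_div, mul_div_cancel_left₀ _ hdet, ← htrace, hamiltonian, residueZero,
    residueOne, residueEndpoint, sub_zero]
  field

open scoped Matrix.Norms.Operator

theorem isSchlesinger_residue :
    IsSchlesinger !![n + (α + β) / 2, 0; 0, -(n + (α + β) / 2)] (residueZero α β n)
      (residueOne α β n) (residueEndpoint α β n) (Set.Ioo 0 1) := by
  have hdet {t : ℝ} (ht : t ∈ Set.Ioo 0 1) :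
      ∀ᶠ τ in nhds t, (hankel (jacobiFunctional α β τ) n).det ≠ 0 :=
    Filter.eventually_of_mem (isOpen_Ioo.mem_nhds ht) fun τ hτ =>
      det_hankel_jacobiFunctional_ne_zero α hβ hτ n
  refine ⟨fun t ht => ?_, fun t ht => ?_, fun t ht =>
    residueZero_add_residueOne_add_residueEndpoint α n hβ ht⟩
  · have h := hasDerivAt_residue (hasWeakDerivAt_jacobiFunctional α hβ ht) (hdet ht) ht.1.ne'
      (hasWeakDerivAt_functionalZero α hβ ht) (functionalZero_X_sub_C_mul α hβ ht)
    rwa [sub_zero] at h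
  · exact hasDerivAt_residue (hasWeakDerivAt_jacobiFunctional α hβ ht) (hdet ht) ht.2.ne
      (hasWeakDerivAt_functionalOne α hβ ht) (functionalOne_X_sub_C_mul α hβ ht)

end JacobiSchlesinger

end JacobiPVI

open JacobiPVI in
theorem jacobi_sigma_PVI_general (α β : ℝ) (hβ : -1 < β) (n : ℕ) (σ : ℝ → ℝ)
    (hσ : ∀ t ∈ Set.Ioo (0 : ℝ) 1, σ t =
      t * (t - 1) * deriv (fun s => Real.log (jacobiHankel n s α β)) t +
        (-(2 * (n : ℝ) + α + β) ^ 2 / 4) * t +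
        (2 * (n : ℝ) * ((n : ℝ) + α + β) + β * (α + β)) / 4) :
    DifferentiableOn ℝ σ (Set.Ioo 0 1) ∧ DifferentiableOn ℝ (deriv σ) (Set.Ioo 0 1) ∧
    ∀ t ∈ Set.Ioo (0 : ℝ) 1,
      deriv σ t * (t * (t - 1) * deriv (deriv σ) t) ^ 2 +
        (2 * deriv σ t * (t * deriv σ t - σ t) - (deriv σ t) ^ 2 -
          ((α + β) / 2) * ((β - α) / 2) * ((2 * (n : ℝ) + α + β) / 2) *
            ((2 * (n : ℝ) + α + β) / 2)) ^ 2 =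
      (deriv σ t + ((α + β) / 2) ^ 2) * (deriv σ t + ((β - α) / 2) ^ 2) *
        (deriv σ t + ((2 * (n : ℝ) + α + β) / 2) ^ 2) *
        (deriv σ t + ((2 * (n : ℝ) + α + β) / 2) ^ 2) := by
  refine sigma_form_of_isSchlesinger isOpen_Ioo (fun h => h.1.false) (fun h => h.2.false)
    (isSchlesinger_residue α n hβ) (fun _ _ => trace_residue ..) (fun _ _ => trace_residue ..)
    (fun _ _ => trace_residue ..) ?_ (fun _ => det_residueZero α n hβ)
    (fun _ => det_residueOne α n hβ) (fun _ => det_residueEndpoint α n hβ) fun t ht => ?_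
  · rw [Matrix.det_fin_two_of]
    ring
  · rw [hσ t ht, mul_deriv_log_jacobiHankel α n hβ ht]
    ring

theorem jacobi_sigma_PVI (α β : ℝ) (hα : 0 < α) (hβ : 0 < β) (n : ℕ) (hn : 1 ≤ n)
    (σ : ℝ → ℝ)
    (hσ : ∀ t : ℝ, σ t =
      t * (t - 1) * deriv (fun s => Real.log (jacobiHankel n s α β)) t +
        (-(2 * (n : ℝ) + α + β) ^ 2 / 4) * t +
        (2 * (n : ℝ) * ((n : ℝ) + α + β) + β * (α + β)) / 4) :
    DifferentiableOn ℝ σ (Set.Ioo 0 1) ∧ DifferentiableOn ℝ (deriv σ) (Set.Ioo 0 1) ∧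
    ∀ t ∈ Set.Ioo (0 : ℝ) 1,
      deriv σ t * (t * (t - 1) * deriv (deriv σ) t) ^ 2 +
        (2 * deriv σ t * (t * deriv σ t - σ t) - (deriv σ t) ^ 2 -
          ((α + β) / 2) * ((β - α) / 2) * ((2 * (n : ℝ) + α + β) / 2) *
            ((2 * (n : ℝ) + α + β) / 2)) ^ 2 =
      (deriv σ t + ((α + β) / 2) ^ 2) * (deriv σ t + ((β - α) / 2) ^ 2) *
        (deriv σ t + ((2 * (n : ℝ) + α + β) / 2) ^ 2) *
        (deriv σ t + ((2 * (n : ℝ) + α + β) / 2) ^ 2) :=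
  jacobi_sigma_PVI_general α β (by linarith) n σ fun t _ => hσ t
end

section
/- For every real β > 0, Binet's integral formula holds: log Γ(β) + β − (β − 1/2) log β − (1/2) log(2π) = ∫_0^∞ ( 1/2 − 1/t + 1/(e^t − 1) ) · e^{−β t} / t dt, where the integrand is integrable on (0, ∞). -/
open MeasureTheory Real

/-!
Both sides of Binet's formula, as functions of `β`, tend to `0` along `β, β + 1, β + 2, …`, so it
suffices that they have the same decrement from `β` to `β + 1`. In both cases this decrement is
minus the error of the one-step trapezoidal rule for `log` on `[β, β + 1]`. On the left this is the
functional equation `Γ (β + 1) = β Γ β`. On the right, the decrement of the integrand is `1 / t`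
times the trapezoidal error of `x ↦ exp (-x t)`; writing trapezoidal errors in Peano form
`∫ (x - m) f' x` with `m` the midpoint, and using `∫ exp (-x t) dt = 1 / x = log' x`, Fubini turns
the error for the exponentials into the one for `log`.

The limit on the left combines Euler's limit formula for `Γ` with Stirling's formula for `n!`; the
limit on the right follows from `0 ≤ 1/2 - 1/t + 1/(exp t - 1) ≤ t/4`, which bounds the integral by
`1 / (4 β)`.
-/

open Filter Set Topology

section TelescopingSequences

variable {G : Type*} [AddCommGroup G] [TopologicalSpace G] [ContinuousSub G] [T2Space G]

lemma eq_of_tendsto_of_sub_succ_eq {u v : ℕ → G} {l : G} (hu : Tendsto u atTop (𝓝 l))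
    (hv : Tendsto v atTop (𝓝 l)) (h : ∀ n, u n - u (n + 1) = v n - v (n + 1)) : u = v := by
  have h_succ (n : ℕ) : u (n + 1) - v (n + 1) = u n - v n :=
    (sub_eq_sub_iff_sub_eq_sub.mp (h n)).symm
  have h_const (n k : ℕ) : u (k + n) - v (k + n) = u n - v n := by
    induction k with
    | zero => rw [zero_add]
    | succ k ih => rw [add_right_comm, h_succ, ih]
  have h_lim : Tendsto (fun k ↦ u k - v k) atTop (𝓝 0) := sub_self l ▸ hu.sub hv
  refine funext fun n ↦ sub_eq_zero.mp (tendsto_nhds_unique ?_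
    ((tendsto_add_atTop_iff_nat n).mpr h_lim))
  simp only [h_const, tendsto_const_nhds]

end TelescopingSequences

section ExponentialIntegrals

variable {E : Type*} [NormedAddCommGroup E] {a b C : ℝ}

lemma integrableOn_Ioi_of_norm_le_mul_exp {f : ℝ → E} (hb : 0 < b)
    (hf : AEStronglyMeasurable f (volume.restrict (Ioi a)))
    (hfC : ∀ t ∈ Ioi a, ‖f t‖ ≤ C * exp (-b * t)) : IntegrableOn f (Ioi a) :=
  ((integrableOn_exp_mul_Ioi (neg_lt_zero.mpr hb) a).const_mul C).mono' hf
    (ae_restrict_of_forall_mem measurableSet_Ioi hfC)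

variable [NormedSpace ℝ E]

lemma norm_integral_Ioi_le_of_norm_le_mul_exp {f : ℝ → E} (hb : 0 < b)
    (hfC : ∀ t ∈ Ioi a, ‖f t‖ ≤ C * exp (-b * t)) :
    ‖∫ t in Ioi a, f t‖ ≤ C * (exp (-b * a) / b) := by
  have hb' : -b < 0 := neg_lt_zero.mpr hb
  calc ‖∫ t in Ioi a, f t‖
      ≤ ∫ t in Ioi a, C * exp (-b * t) :=
        norm_integral_le_of_norm_le ((integrableOn_exp_mul_Ioi hb' a).const_mul C)
          (ae_restrict_of_forall_mem measurableSet_Ioi hfC)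
    _ = C * (exp (-b * a) / b) := by
        rw [integral_const_mul, integral_exp_mul_Ioi hb', neg_div_neg_eq]

lemma integrable_prod_exp_neg_mul_smul (ha : 0 < a) {g : ℝ → E} (hg : IntegrableOn g (Ioc a b)) :
    Integrable (fun p : ℝ × ℝ ↦ exp (-p.2 * p.1) • g p.2)
      ((volume.restrict (Ioi 0)).prod (volume.restrict (Ioc a b))) := by
  have h_bound : Integrable (fun p : ℝ × ℝ ↦ exp (-a * p.1) * ‖g p.2‖)
      ((volume.restrict (Ioi 0)).prod (volume.restrict (Ioc a b))) :=
    (integrableOn_exp_mul_Ioi (neg_lt_zero.mpr ha) 0).integrable.mul_prod hg.norm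
  refine h_bound.mono' (.smul (Continuous.aestronglyMeasurable (by fun_prop))
    hg.aestronglyMeasurable.comp_snd) ?_
  rw [Measure.prod_restrict]
  filter_upwards [ae_restrict_mem (measurableSet_Ioi.prod measurableSet_Ioc)] with p ⟨ht, hx⟩
  rw [norm_smul, norm_of_nonneg (exp_pos _).le]
  gcongr
  exacts [le_of_lt ht, hx.1.le]

lemma integral_Ioi_intervalIntegral_exp_neg_mul_smul [CompleteSpace E] (ha : 0 < a) (hab : a ≤ b)
    {g : ℝ → E} (hg : IntervalIntegrable g volume a b) :
    ∫ t in Ioi 0, ∫ x in a..b, exp (-x * t) • g x = ∫ x in a..b, x⁻¹ • g x := by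
  simp only [intervalIntegral.integral_of_le hab]
  rw [integral_integral_swap (integrable_prod_exp_neg_mul_smul ha hg.1)]
  refine setIntegral_congr_fun measurableSet_Ioc fun x hx ↦ ?_
  have hx0 : -x < 0 := neg_lt_zero.mpr (ha.trans hx.1)
  rw [integral_smul_const, integral_exp_mul_Ioi hx0, mul_zero, exp_zero, neg_div_neg_eq, one_div]

end ExponentialIntegrals

section TrapezoidalRule

lemma trapezoidal_error_one_eq_integral {f f' : ℝ → ℝ} {a b : ℝ}
    (hf : ∀ x ∈ uIcc a b, HasDerivAt f (f' x) x) (hf' : IntervalIntegrable f' volume a b) :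
    trapezoidal_error f 1 a b = ∫ x in a..b, (x - (a + b) / 2) * f' x := by
  rw [intervalIntegral.integral_mul_deriv_eq_deriv_mul
    (fun x _ ↦ (hasDerivAt_id' x).sub_const ((a + b) / 2)) hf intervalIntegrable_const hf',
    trapezoidal_error, trapezoidal_integral_one]
  simp only [one_mul]
  ring

lemma trapezoidal_error_log {a b : ℝ} (h : 0 ∉ uIcc a b) :
    trapezoidal_error log 1 a b = ∫ x in a..b, x⁻¹ * (x - (a + b) / 2) := by
  have h_ne : ∀ x ∈ uIcc a b, x ≠ 0 := fun x hx ↦ ne_of_mem_of_not_mem hx h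
  rw [trapezoidal_error_one_eq_integral (fun x hx ↦ hasDerivAt_log (h_ne x hx))
    (intervalIntegral.intervalIntegrable_inv h_ne continuousOn_id)]
  simp only [mul_comm]

lemma trapezoidal_error_exp_neg_mul (a b t : ℝ) :
    trapezoidal_error (fun x ↦ exp (-x * t)) 1 a b =
      -t * ∫ x in a..b, exp (-x * t) * (x - (a + b) / 2) := by
  have h_deriv (x : ℝ) : HasDerivAt (fun x ↦ exp (-x * t)) (exp (-x * t) * (-1 * t)) x :=
    ((hasDerivAt_neg' x).mul_const t).exp
  rw [trapezoidal_error_one_eq_integral (fun x _ ↦ h_deriv x)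
    (Continuous.intervalIntegrable (by fun_prop) a b), ← intervalIntegral.integral_const_mul]
  congr 1 with x
  ring

end TrapezoidalRule

section StirlingRemainder

/-- The remainder in Stirling's approximation of `log Γ(β)` by
`(β - 1/2) log β - β + (1/2) log (2π)`, for `0 < β`. It is the left-hand side of Binet's formula. -/
noncomputable def stirlingRemainder (β : ℝ) : ℝ :=
  log (Gamma β) + β - (β - 1 / 2) * log β - 1 / 2 * log (2 * π)

lemma log_Gamma_add_one {x : ℝ} (hx : 0 < x) : log (Gamma (x + 1)) = log (Gamma x) + log x := by
  rw [Gamma_add_one hx.ne', log_mul hx.ne' (Gamma_pos_of_pos hx).ne', add_comm]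

lemma log_Gamma_add_nat {x : ℝ} (hx : 0 < x) (n : ℕ) :
    log (Gamma (x + n)) = log (Gamma x) + ∑ m ∈ Finset.range n, log (x + m) :=
  BohrMollerup.f_add_nat_eq (f := log ∘ Gamma) log_Gamma_add_one hx n

lemma stirlingRemainder_sub_add_one {β : ℝ} (hβ : 0 < β) :
    stirlingRemainder β - stirlingRemainder (β + 1) = -trapezoidal_error log 1 β (β + 1) := by
  rw [stirlingRemainder, stirlingRemainder, log_Gamma_add_one hβ, trapezoidal_error,
    trapezoidal_integral_one, integral_log]
  ring

lemma tendsto_log_Gamma_add_nat_sub {x : ℝ} (hx : 0 < x) :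
    Tendsto (fun n : ℕ ↦ log (Gamma (x + (n + 1 : ℕ))) - log n.factorial - x * log n)
      atTop (𝓝 0) := by
  have h_euler := (BohrMollerup.tendsto_log_gamma hx).const_sub (log (Gamma x))
  rw [sub_self] at h_euler
  refine h_euler.congr fun n ↦ ?_
  rw [log_Gamma_add_nat hx, BohrMollerup.logGammaSeq]
  ring

lemma tendsto_log_factorial_sub :
    Tendsto (fun n : ℕ ↦ log n.factorial - ((n + 1 / 2) * log n - n)) atTop
      (𝓝 (1 / 2 * log (2 * π))) := by
  have h_stirling := (Stirling.tendsto_stirlingSeq_sqrt_pi.log (by positivity)).const_add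
    (1 / 2 * log 2)
  have h_const : 1 / 2 * log 2 + log √π = 1 / 2 * log (2 * π) := by
    rw [log_sqrt pi_pos.le, log_mul two_ne_zero pi_ne_zero]
    ring
  rw [h_const] at h_stirling
  refine h_stirling.congr' ?_
  filter_upwards [eventually_ne_atTop 0] with n hn
  have hn' : (n : ℝ) ≠ 0 := Nat.cast_ne_zero.mpr hn
  rw [Stirling.log_stirlingSeq_formula, log_mul two_ne_zero hn', log_div hn' (exp_ne_zero 1),
    log_exp]
  ring

lemma tendsto_add_mul_log_add_sub_log (a b : ℝ) :
    Tendsto (fun y ↦ (y + a) * (log (y + b) - log y)) atTop (𝓝 b) := by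
  have h_main : Tendsto (fun y ↦ y * (log (y + b) - log y)) atTop (𝓝 b) := by
    refine (tendsto_mul_log_one_add_div_atTop b).congr' ?_
    filter_upwards [eventually_gt_atTop 0, eventually_gt_atTop (-b)] with y hy hyb
    rw [← log_div (by linarith) hy.ne', add_div, div_self hy.ne']
  simpa [add_mul] using h_main.add ((tendsto_log_comp_add_sub_log b).const_mul a)

lemma tendsto_stirlingRemainder_add_nat {x : ℝ} (hx : 0 < x) :
    Tendsto (fun n : ℕ ↦ stirlingRemainder (x + n)) atTop (𝓝 0) := by
  rw [← tendsto_add_atTop_iff_nat 1]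
  have h_gamma := tendsto_log_Gamma_add_nat_sub hx
  have h_factorial := tendsto_log_factorial_sub.sub_const (1 / 2 * log (2 * π))
  have h_log := ((tendsto_add_mul_log_add_sub_log (x + 1 / 2) (x + 1)).comp
    tendsto_natCast_atTop_atTop).sub_const (x + 1)
  have h_sum := (h_gamma.add h_factorial).sub h_log
  simp only [sub_self, add_zero] at h_sum
  refine h_sum.congr fun n ↦ ?_
  have h_arg : (n : ℝ) + (x + 1) = x + (n + 1 : ℕ) := by push_cast; ring
  rw [stirlingRemainder, Function.comp_apply, h_arg]
  push_cast
  ring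

end StirlingRemainder

section BinetIntegral

/-- The function `1/2 - 1/t + 1/(exp t - 1)` whose Laplace transform, after division by `t`, is
Binet's integral. It is only meaningful for `t ≠ 0`: its junk value at `0` is `1/2`, whereas its
limit there is `0`. -/
noncomputable def binetKernel (t : ℝ) : ℝ := 1 / 2 - 1 / t + 1 / (exp t - 1)

/-- The integrand in Binet's formula, as a function of the parameter `β` and the variable `t`. -/
noncomputable def binetIntegrand (β t : ℝ) : ℝ := binetKernel t * exp (-β * t) / t

/-- Binet's integral, the right-hand side of Binet's formula. -/
noncomputable def binetIntegral (β : ℝ) : ℝ := ∫ t in Ioi 0, binetIntegrand β t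

lemma two_mul_exp_sub_one_le {t : ℝ} (ht : 0 ≤ t) : 2 * (exp t - 1) ≤ t * (exp t + 1) := by
  have h_log := le_log_one_add_of_nonneg (sub_nonneg.mpr (one_le_exp ht))
  rw [add_sub_cancel, log_exp, div_le_iff₀ (by linarith [exp_pos t])] at h_log
  linarith

lemma binetKernel_nonneg {t : ℝ} (ht : 0 < t) : 0 ≤ binetKernel t := by
  have h_exp : 0 < exp t - 1 := sub_pos.mpr (one_lt_exp_iff.mpr ht)
  have h_eq : binetKernel t =
      (t * (exp t + 1) - 2 * (exp t - 1)) / (2 * t * (exp t - 1)) := by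
    rw [binetKernel]
    field_simp
    ring
  rw [h_eq]
  exact div_nonneg (sub_nonneg.mpr (two_mul_exp_sub_one_le ht.le)) (by positivity)

lemma binetKernel_le {t : ℝ} (ht : 0 < t) : binetKernel t ≤ t / 4 := by
  have h_exp : t + t ^ 2 / 2 ≤ exp t - 1 := by linarith [quadratic_le_exp_of_nonneg ht.le]
  calc binetKernel t
      ≤ 1 / 2 - 1 / t + 1 / (t + t ^ 2 / 2) := by rw [binetKernel]; gcongr
    _ = t / 4 - t ^ 2 / (4 * (2 + t)) := by field_simp; ring
    _ ≤ t / 4 := sub_le_self _ (by positivity)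

lemma norm_binetIntegrand_le (β : ℝ) {t : ℝ} (ht : 0 < t) :
    ‖binetIntegrand β t‖ ≤ 1 / 4 * exp (-β * t) := by
  have h_nonneg := binetKernel_nonneg ht
  rw [binetIntegrand, norm_of_nonneg (by positivity), div_le_iff₀ ht]
  calc binetKernel t * exp (-β * t)
      ≤ t / 4 * exp (-β * t) := by gcongr; exact binetKernel_le ht
    _ = 1 / 4 * exp (-β * t) * t := by ring

lemma measurable_binetIntegrand (β : ℝ) : Measurable (binetIntegrand β) := by
  unfold binetIntegrand binetKernel
  fun_prop

lemma integrableOn_binetIntegrand {β : ℝ} (hβ : 0 < β) :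
    IntegrableOn (binetIntegrand β) (Ioi 0) :=
  integrableOn_Ioi_of_norm_le_mul_exp hβ (measurable_binetIntegrand β).aestronglyMeasurable
    fun _ ht ↦ norm_binetIntegrand_le β ht

lemma norm_binetIntegral_le {β : ℝ} (hβ : 0 < β) : ‖binetIntegral β‖ ≤ 1 / (4 * β) := by
  have h_bound := norm_integral_Ioi_le_of_norm_le_mul_exp hβ fun _ ↦ norm_binetIntegrand_le β
  rwa [mul_zero, exp_zero, div_mul_div_comm, one_mul] at h_bound

lemma tendsto_binetIntegral_atTop : Tendsto binetIntegral atTop (𝓝 0) := by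
  refine squeeze_zero_norm' ((eventually_gt_atTop 0).mono fun β ↦ norm_binetIntegral_le) ?_
  exact tendsto_const_nhds.div_atTop (tendsto_id.const_mul_atTop four_pos)

lemma binetIntegrand_sub_add_one (β : ℝ) {t : ℝ} (ht : t ≠ 0) :
    binetIntegrand β t - binetIntegrand (β + 1) t =
      trapezoidal_error (fun x ↦ exp (-x * t)) 1 β (β + 1) / t := by
  have h_integral : ∫ x in β..β + 1, exp (-x * t) =
      (exp (-β * t) - exp (-(β + 1) * t)) / t := by
    simp only [neg_mul_comm]
    rw [intervalIntegral.integral_comp_mul_right exp (neg_ne_zero.mpr ht), integral_exp,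
      smul_eq_mul, inv_neg]
    ring
  have h_exp : exp (-(β + 1) * t) = exp (-β * t) / exp t := by
    rw [← exp_sub]
    ring_nf
  have h_ne : exp t - 1 ≠ 0 := sub_ne_zero.mpr (exp_eq_one_iff t |>.not.mpr ht)
  rw [trapezoidal_error, trapezoidal_integral_one, h_integral, binetIntegrand, binetIntegrand,
    binetKernel, h_exp]
  field_simp
  ring

lemma binetIntegral_sub_add_one {β : ℝ} (hβ : 0 < β) :
    binetIntegral β - binetIntegral (β + 1) = -trapezoidal_error log 1 β (β + 1) := by
  have hβ1 : 0 < β + 1 := by positivity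
  calc binetIntegral β - binetIntegral (β + 1)
      = ∫ t in Ioi 0, (binetIntegrand β t - binetIntegrand (β + 1) t) :=
        (integral_sub (integrableOn_binetIntegrand hβ) (integrableOn_binetIntegrand hβ1)).symm
    _ = ∫ t in Ioi 0, -∫ x in β..β + 1, exp (-x * t) * (x - (β + (β + 1)) / 2) := by
        refine setIntegral_congr_fun measurableSet_Ioi fun t (ht : 0 < t) ↦ ?_
        rw [binetIntegrand_sub_add_one β ht.ne', trapezoidal_error_exp_neg_mul, neg_mul, neg_div,
          mul_div_cancel_left₀ _ ht.ne']
    _ = -∫ x in β..β + 1, x⁻¹ * (x - (β + (β + 1)) / 2) := by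
        rw [integral_neg]
        exact congrArg Neg.neg <| integral_Ioi_intervalIntegral_exp_neg_mul_smul hβ
          (le_add_of_nonneg_right zero_le_one) (Continuous.intervalIntegrable (by fun_prop) _ _)
    _ = -trapezoidal_error log 1 β (β + 1) := by
        rw [trapezoidal_error_log (notMem_uIcc_of_lt hβ hβ1)]

end BinetIntegral

theorem binet_formula (β : ℝ) (hβ : 0 < β) :
    IntegrableOn
      (fun t : ℝ => (1 / 2 - 1 / t + 1 / (Real.exp t - 1)) * Real.exp (-β * t) / t)
      (Set.Ioi 0) ∧
    Real.log (Real.Gamma β) + β - (β - 1 / 2) * Real.log β - 1 / 2 * Real.log (2 * π) =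
      ∫ t in Set.Ioi (0 : ℝ),
        (1 / 2 - 1 / t + 1 / (Real.exp t - 1)) * Real.exp (-β * t) / t := by
  refine ⟨integrableOn_binetIntegrand hβ, ?_⟩
  change stirlingRemainder β = binetIntegral β
  have h_remainder := tendsto_stirlingRemainder_add_nat hβ
  have h_integral : Tendsto (fun n : ℕ ↦ binetIntegral (β + n)) atTop (𝓝 0) :=
    tendsto_binetIntegral_atTop.comp
      (tendsto_atTop_add_const_left atTop β tendsto_natCast_atTop_atTop)
  have h_sub (n : ℕ) : stirlingRemainder (β + n) - stirlingRemainder (β + (n + 1 : ℕ)) =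
      binetIntegral (β + n) - binetIntegral (β + (n + 1 : ℕ)) := by
    have hβn : 0 < β + n := by positivity
    rw [Nat.cast_succ, ← add_assoc, stirlingRemainder_sub_add_one hβn,
      binetIntegral_sub_add_one hβn]
  simpa using congrFun (eq_of_tendsto_of_sub_succ_eq h_remainder h_integral h_sub) 0
end

section
/- For all real numbers a, b with 0 < a < b, the following integral identity holds: ∫_a^b log x / √( (b−x)(x−a) ) dx = 2π log( (√a + √b)/2 ). -/
open MeasureTheory Real intervalIntegral

/-!
With `p = (√a + √b) / 2` and `q = (√b - √a) / 2` we have `a = (p - q)²` and `b = (p + q)²`. The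
substitution `x = (a + b) / 2 - (b - a) / 2 * cos θ` turns `dx / √((b - x) (x - a))` into `dθ` on
`[0, π]`, and by the law of cosines `x = p² + q² - 2 p q cos θ` is the squared distance from `q` to
the point `p e^{iθ}`. By the symmetry `θ ↦ 2π - θ` the integral is therefore `2π` times the average
of `log ‖z - q‖` over the circle `‖z‖ = p`, which is `log p` because `q` lies in the disc that the
circle bounds.
-/

section

variable {E : Type*} [NormedAddCommGroup E] [NormedSpace ℝ E] {a b : ℝ}

lemma integral_eq_two_smul_integral_of_comp_add_sub {f : ℝ → E}
    (hf : IntervalIntegrable f volume a b) (hsymm : ∀ x, f (a + b - x) = f x) :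
    ∫ x in a..b, f x = (2 : ℝ) • ∫ x in a..(a + b) / 2, f x := by
  have hmid : (a + b) / 2 ∈ Set.uIcc a b := by
    rcases le_total a b with h | h
    · exact Set.mem_uIcc.2 (.inl ⟨by linarith, by linarith⟩)
    · exact Set.mem_uIcc.2 (.inr ⟨by linarith, by linarith⟩)
  have hleft : IntervalIntegrable f volume a ((a + b) / 2) :=
    hf.mono_set (Set.uIcc_subset_uIcc_left hmid)
  have hright : IntervalIntegrable f volume ((a + b) / 2) b :=
    hf.mono_set (Set.uIcc_subset_uIcc_right hmid)
  have hreflect : ∫ x in (a + b) / 2..b, f x = ∫ x in a..(a + b) / 2, f x := by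
    simpa only [hsymm, add_sub_cancel_left, sub_half] using
      (integral_comp_sub_left (a := a) (b := (a + b) / 2) f (a + b)).symm
  rw [← integral_add_adjacent_intervals hleft hright, hreflect, two_smul]

theorem integral_inv_sqrt_smul_eq_integral_comp_cos (f : ℝ → E) (hab : a < b) :
    ∫ x in a..b, (√((b - x) * (x - a)))⁻¹ • f x =
      ∫ θ in 0..π, f ((a + b) / 2 - (b - a) / 2 * cos θ) := by
  set φ : ℝ → ℝ := fun θ ↦ (a + b) / 2 - (b - a) / 2 * cos θ with hφ
  have hφ_zero : φ 0 = a := by simp only [hφ, cos_zero]; ring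
  have hφ_pi : φ π = b := by simp only [hφ, cos_pi]; ring
  have hφ_deriv (θ : ℝ) : HasDerivAt φ ((b - a) / 2 * sin θ) θ := by
    simpa using ((hasDerivAt_cos θ).const_mul ((b - a) / 2)).const_sub ((a + b) / 2)
  have hφ_deriv_pos {θ : ℝ} (hθ : θ ∈ Set.Ioo 0 π) : 0 < (b - a) / 2 * sin θ :=
    mul_pos (half_pos (sub_pos.2 hab)) (sin_pos_of_mem_Ioo hθ)
  have hφ_sq (θ : ℝ) : (b - φ θ) * (φ θ - a) = ((b - a) / 2 * sin θ) ^ 2 := by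
    linear_combination (-((b - a) / 2) ^ 2) * sin_sq_add_cos_sq θ
  calc ∫ x in a..b, (√((b - x) * (x - a)))⁻¹ • f x
      = ∫ θ in 0..π, ((b - a) / 2 * sin θ) • (√((b - φ θ) * (φ θ - a)))⁻¹ • f (φ θ) := by
        have := integral_deriv_smul_comp_of_deriv_nonneg (a := 0) (b := π) (f := φ)
          (g := fun x ↦ (√((b - x) * (x - a)))⁻¹ • f x) (by fun_prop) (fun θ _ ↦ hφ_deriv θ)
          (fun θ hθ ↦ (hφ_deriv_pos (by simpa [pi_pos.le] using hθ)).le)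
        rw [hφ_zero, hφ_pi] at this
        exact this.symm
    _ = ∫ θ in 0..π, f (φ θ) := by
        -- The integrands may differ at the endpoints, where `sin θ = 0`.
        refine integral_congr_Ioo_of_le pi_pos.le fun θ hθ ↦ ?_
        have hpos := hφ_deriv_pos hθ
        simp only [hφ_sq, sqrt_sq hpos.le, smul_inv_smul₀ hpos.ne']

end

lemma norm_circleMap_zero_sub_ofReal_sq (p q θ : ℝ) :
    ‖circleMap 0 p θ - q‖ ^ 2 = p ^ 2 + q ^ 2 - 2 * p * q * cos θ := by
  have hre : (circleMap 0 p θ * q).re = p * q * cos θ := by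
    rw [circleMap_zero, Complex.re_mul_ofReal, Complex.re_ofReal_mul, Complex.exp_ofReal_mul_I_re,
      mul_right_comm]
  rw [Complex.sq_norm, Complex.normSq_sub, Complex.conj_ofReal, hre, ← Complex.sq_norm,
    norm_circleMap_zero, sq_abs, Complex.normSq_ofReal]
  ring

theorem integral_log_sq_add_sq_sub_two_mul_mul_cos {p q : ℝ} (hqp : |q| ≤ |p|) :
    ∫ θ in 0..π, log (p ^ 2 + q ^ 2 - 2 * p * q * cos θ) = 2 * π * log p := by
  set g : ℝ → ℝ := fun θ ↦ log ‖circleMap 0 p θ - q‖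
  have hlog (θ : ℝ) : log (p ^ 2 + q ^ 2 - 2 * p * q * cos θ) = 2 * g θ := by
    rw [← norm_circleMap_zero_sub_ofReal_sq, log_pow, Nat.cast_ofNat]
  have hint : IntervalIntegrable g volume 0 (2 * π) := circleIntegrable_log_norm_sub_const p
  have hsymm (θ : ℝ) : g (0 + 2 * π - θ) = g θ := by
    have : 2 * g (0 + 2 * π - θ) = 2 * g θ := by rw [← hlog, ← hlog, zero_add, cos_two_pi_sub]
    linarith
  have hmean : (2 * π)⁻¹ * ∫ θ in 0..2 * π, g θ = log p :=
    circleAverage_log_norm_sub_const_of_mem_closedBall (by simpa using hqp)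
  calc ∫ θ in 0..π, log (p ^ 2 + q ^ 2 - 2 * p * q * cos θ)
      = 2 * ∫ θ in 0..π, g θ := by simp only [hlog, intervalIntegral.integral_const_mul]
    _ = ∫ θ in 0..2 * π, g θ := by
        rw [integral_eq_two_smul_integral_of_comp_add_sub hint hsymm, smul_eq_mul, zero_add,
          mul_div_cancel_left₀ π two_ne_zero]
    _ = 2 * π * log p := by rw [← hmean, mul_inv_cancel_left₀ two_pi_pos.ne']

theorem log_integral_identity (a b : ℝ) (ha : 0 < a) (hab : a < b) :
    ∫ x in a..b, Real.log x / Real.sqrt ((b - x) * (x - a)) =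
      2 * π * Real.log ((Real.sqrt a + Real.sqrt b) / 2) := by
  set p := (√a + √b) / 2 with hp
  set q := (√b - √a) / 2 with hq
  have hqp : |q| ≤ |p| := abs_le_abs (by linarith [sqrt_nonneg a]) (by linarith [sqrt_nonneg b])
  have ha_sq : √a ^ 2 = a := sq_sqrt ha.le
  have hb_sq : √b ^ 2 = b := sq_sqrt (ha.trans hab).le
  have hmid : (a + b) / 2 = p ^ 2 + q ^ 2 := by linear_combination -(ha_sq + hb_sq) / 2
  have hhalf : (b - a) / 2 = 2 * p * q := by linear_combination (ha_sq - hb_sq) / 2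
  calc ∫ x in a..b, log x / √((b - x) * (x - a))
      = ∫ x in a..b, (√((b - x) * (x - a)))⁻¹ • log x := by
        simp only [smul_eq_mul, div_eq_inv_mul]
    _ = ∫ θ in 0..π, log ((a + b) / 2 - (b - a) / 2 * cos θ) :=
        integral_inv_sqrt_smul_eq_integral_comp_cos log hab
    _ = ∫ θ in 0..π, log (p ^ 2 + q ^ 2 - 2 * p * q * cos θ) := by rw [hmid, hhalf]
    _ = 2 * π * log p := integral_log_sq_add_sq_sub_two_mul_mul_cos hqp
end

section
/- For all real numbers a, b with 0 < a < b, the following integral identity holds: ∫_a^b log x / ( x √( (b−x)(x−a) ) ) dx = ( 2π / √(ab) ) · log( 2√(ab) / (√a + √b) ). -/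
/-!
The substitution `y = x⁻¹` removes the factor `x` from the denominator and only rescales the
arcsine weight, from that of `[a, b]` to that of `[b⁻¹, a⁻¹]`. There the affine image of the cosine
turns the weight into `dθ` on `[0, π]`, and `y` into the squared modulus of a point `z` running
through a circle that does not enclose the origin. The average of `log ‖z‖` over such a circle is
its value at the centre, here `(√a⁻¹ + √b⁻¹) / 2`.
-/

open MeasureTheory Real intervalIntegral

lemma circleAverage_log_norm (c : ℂ) (R : ℝ) :
    circleAverage (log ‖·‖) c R = log (max ‖c‖ |R|) := by
  rcases eq_or_ne R 0 with rfl | hR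
  · simp
  have hR' : 0 < |R| := abs_pos.2 hR
  calc circleAverage (log ‖·‖) c R
      = log |R| + log⁺ (|R|⁻¹ * ‖c‖) := by
        have h := circleAverage_log_norm_sub_const_eq_log_radius_add_posLog (a := 0) (c := c) hR
        rw [← posLog_abs (R⁻¹ * _), abs_mul, abs_inv] at h
        simpa using h
    _ = log (|R| * max 1 (|R|⁻¹ * ‖c‖)) := by
        rw [posLog_eq_log_max_one (by positivity), log_mul hR'.ne' (by positivity)]
    _ = log (max ‖c‖ |R|) := by
        rw [mul_max_of_nonneg _ _ hR'.le, mul_one, mul_inv_cancel_left₀ hR'.ne', max_comm]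

lemma norm_circleMap_ofReal_sq (s t θ : ℝ) :
    ‖circleMap (s : ℂ) t θ‖ ^ 2 = s ^ 2 + t ^ 2 + 2 * s * t * cos θ := by
  rw [← Complex.normSq_eq_norm_sq, Complex.normSq_apply]
  simp only [circleMap, Complex.add_re, Complex.add_im, Complex.re_ofReal_mul,
    Complex.im_ofReal_mul, Complex.ofReal_re, Complex.ofReal_im, Complex.exp_ofReal_mul_I_re,
    Complex.exp_ofReal_mul_I_im]
  linear_combination t ^ 2 * sin_sq_add_cos_sq θ

lemma integral_comp_cos_zero_two_pi {E : Type*} [NormedAddCommGroup E] [NormedSpace ℝ E]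
    (f : ℝ → E) :
    ∫ θ in 0..2 * π, f (cos θ) = (2 : ℝ) • ∫ θ in 0..π, f (cos θ) := by
  have integral_reflect : ∫ θ in π..2 * π, f (cos θ) = ∫ θ in 0..π, f (cos θ) := by
    have h := integral_comp_sub_left (a := 0) (b := π) (fun θ ↦ f (cos θ)) (2 * π)
    simp only [cos_two_pi_sub, sub_zero] at h
    rw [h, two_mul, add_sub_cancel_right]
  by_cases hf : IntervalIntegrable (fun θ ↦ f (cos θ)) volume 0 π
  · have hf' : IntervalIntegrable (fun θ ↦ f (cos θ)) volume π (2 * π) := by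
      have h := (hf.comp_sub_left (2 * π)).symm
      simp only [cos_two_pi_sub, sub_zero] at h
      rwa [two_mul, add_sub_cancel_right, ← two_mul] at h
    rw [← integral_add_adjacent_intervals hf hf', integral_reflect, two_smul]
  · have hf' : ¬IntervalIntegrable (fun θ ↦ f (cos θ)) volume 0 (2 * π) := fun h ↦
      hf <| h.mono_set <| Set.uIcc_subset_uIcc_left <|
        Set.mem_uIcc_of_le pi_pos.le (by linarith [pi_pos])
    rw [integral_undef hf, integral_undef hf', smul_zero]

lemma integral_log_sq_add_sq_add_mul_cos (s t : ℝ) :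
    ∫ θ in 0..π, log (s ^ 2 + t ^ 2 + 2 * s * t * cos θ) = 2 * π * log (max |s| |t|) := by
  have log_sq (θ : ℝ) :
      log (s ^ 2 + t ^ 2 + 2 * s * t * cos θ) = 2 * log ‖circleMap (s : ℂ) t θ‖ := by
    rw [← norm_circleMap_ofReal_sq, log_pow, Nat.cast_ofNat]
  have full_circle : ∫ θ in 0..2 * π, log (s ^ 2 + t ^ 2 + 2 * s * t * cos θ)
      = 2 * (2 * π * log (max |s| |t|)) := by
    simp_rw [log_sq, intervalIntegral.integral_const_mul]
    rw [← norm_eq_abs s, ← Complex.norm_real, ← circleAverage_log_norm, circleAverage_def,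
      smul_eq_mul, mul_inv_cancel_left₀ two_pi_pos.ne']
  rw [integral_comp_cos_zero_two_pi fun u ↦ log (s ^ 2 + t ^ 2 + 2 * s * t * u), smul_eq_mul]
    at full_circle
  exact mul_left_cancel₀ two_ne_zero full_circle

lemma integral_div_sqrt_sub_mul_sub_eq_integral_cos {a b : ℝ} (hab : a < b) (f : ℝ → ℝ) :
    ∫ x in a..b, f x / √((b - x) * (x - a)) =
      ∫ θ in 0..π, f ((a + b) / 2 + (b - a) / 2 * cos θ) := by
  set m := (a + b) / 2 with hm
  set r := (b - a) / 2 with hr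
  have hr0 : 0 < r := by linarith
  have weight (t : ℝ) : √((b - (m + r * t)) * (m + r * t - a)) = r * √(1 - t ^ 2) := by
    have radicand : (b - (m + r * t)) * (m + r * t - a) = r ^ 2 * (1 - t ^ 2) := by
      rw [hm, hr]
      ring
    rw [radicand, sqrt_mul (sq_nonneg r), sqrt_sq hr0.le]
  calc ∫ x in a..b, f x / √((b - x) * (x - a))
      = r * ∫ t in -1..1, f (m + r * t) / √((b - (m + r * t)) * (m + r * t - a)) := by
        rw [mul_integral_comp_add_mul (f := fun x ↦ f x / √((b - x) * (x - a)))]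
        congr 1 <;> rw [hm, hr] <;> ring
    _ = ∫ t in -1..1, f (m + r * t) * √(1 - t ^ 2)⁻¹ := by
        simp_rw [← intervalIntegral.integral_const_mul, weight, sqrt_inv]
        congr! 2
        field_simp
    _ = ∫ θ in 0..π, f (m + r * cos θ) := by
        rw [← Polynomial.Chebyshev.integral_measureT fun t ↦ f (m + r * t),
          Polynomial.Chebyshev.integral_measureT_eq_integral_cos]

lemma integral_log_div_sqrt_sub_mul_sub {a b : ℝ} (ha : 0 ≤ a) (hab : a < b) :
    ∫ x in a..b, log x / √((b - x) * (x - a)) = 2 * π * log ((√a + √b) / 2) := by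
  set s := (√b + √a) / 2 with hs
  set t := (√b - √a) / 2 with ht
  have hab' : √a < √b := sqrt_lt_sqrt ha hab
  have hts : |t| ≤ |s| := by
    rw [abs_of_pos (by linarith), abs_of_nonneg (by positivity)]
    linarith [sqrt_nonneg a]
  have centre : (a + b) / 2 = s ^ 2 + t ^ 2 := by
    linear_combination -sq_sqrt ha / 2 - sq_sqrt (ha.trans hab.le) / 2
  have radius : (b - a) / 2 = 2 * s * t := by
    linear_combination sq_sqrt ha / 2 - sq_sqrt (ha.trans hab.le) / 2
  rw [integral_div_sqrt_sub_mul_sub_eq_integral_cos hab, centre, radius,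
    integral_log_sq_add_sq_add_mul_cos, max_eq_left hts, log_abs, hs, add_comm]

section Inversion

variable {E : Type*} [NormedAddCommGroup E] [NormedSpace ℝ E] {a b : ℝ}

lemma integral_inv_sq_smul_comp_inv (h : (0 : ℝ) ∉ Set.uIcc a b) (g : ℝ → E) :
    ∫ x in a..b, (x ^ 2)⁻¹ • g x⁻¹ = ∫ y in b⁻¹..a⁻¹, g y := by
  have ne_zero {x : ℝ} (hx : x ∈ Set.uIcc a b) : x ≠ 0 := ne_of_mem_of_not_mem hx h
  have substitution := integral_deriv_smul_comp_of_deriv_nonpos (a := a) (b := b) (g := g)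
    (f := fun x ↦ x⁻¹) (f' := fun x ↦ -(x ^ 2)⁻¹)
    (continuousOn_inv₀.mono fun _ hx ↦ ne_zero hx)
    (fun _ hx ↦ hasDerivAt_inv (ne_zero (Set.Ioo_subset_Icc_self hx)))
    (fun x _ ↦ neg_nonpos.2 (by positivity))
  simp only [neg_smul, intervalIntegral.integral_neg, Function.comp_apply] at substitution
  rw [integral_symm a⁻¹, ← substitution, neg_neg]

lemma integral_inv_mul_sqrt_sub_mul_sub_smul (ha : 0 < a) (hb : 0 < b) (f : ℝ → E) :
    ∫ x in a..b, (x * √((b - x) * (x - a)))⁻¹ • f x =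
      (√(a * b))⁻¹ • ∫ y in b⁻¹..a⁻¹, (√((a⁻¹ - y) * (y - b⁻¹)))⁻¹ • f y⁻¹ := by
  have weight {x : ℝ} (hx : 0 < x) :
      √((b - x) * (x - a)) = √(a * b) * x * √((a⁻¹ - x⁻¹) * (x⁻¹ - b⁻¹)) := by
    have radicand : (b - x) * (x - a) = a * b * x ^ 2 * ((a⁻¹ - x⁻¹) * (x⁻¹ - b⁻¹)) := by
      field_simp
    rw [radicand, sqrt_mul (by positivity), sqrt_mul (by positivity), sqrt_sq hx.le]
  rw [← integral_inv_sq_smul_comp_inv (Set.notMem_uIcc_of_lt ha hb),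
    ← intervalIntegral.integral_smul]
  refine integral_congr fun x hx ↦ ?_
  have hx0 : 0 < x := (lt_min ha hb).trans_le hx.1
  simp only [weight hx0, smul_smul, inv_inv]
  congr 1
  field_simp

end Inversion

theorem log_over_x_integral_identity (a b : ℝ) (ha : 0 < a) (hab : a < b) :
    ∫ x in a..b, Real.log x / (x * Real.sqrt ((b - x) * (x - a))) =
      2 * π / Real.sqrt (a * b) *
        Real.log (2 * Real.sqrt (a * b) / (Real.sqrt a + Real.sqrt b)) := by
  have hb : 0 < b := ha.trans hab
  have inv_mean : (√b⁻¹ + √a⁻¹) / 2 = (2 * √(a * b) / (√a + √b))⁻¹ := by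
    rw [sqrt_inv, sqrt_inv, sqrt_mul ha.le]
    field_simp
  calc ∫ x in a..b, log x / (x * √((b - x) * (x - a)))
      = (√(a * b))⁻¹ * ∫ y in b⁻¹..a⁻¹, log y⁻¹ / √((a⁻¹ - y) * (y - b⁻¹)) := by
        simpa only [smul_eq_mul, ← div_eq_inv_mul] using
          integral_inv_mul_sqrt_sub_mul_sub_smul ha hb log
    _ = (√(a * b))⁻¹ * -(2 * π * log ((√b⁻¹ + √a⁻¹) / 2)) := by
        simp_rw [log_inv, neg_div, intervalIntegral.integral_neg]
        rw [integral_log_div_sqrt_sub_mul_sub (inv_pos.2 hb).le (inv_strictAnti₀ ha hab)]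
    _ = 2 * π / √(a * b) * log (2 * √(a * b) / (√a + √b)) := by
        rw [inv_mean, log_inv]
        ring
end
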